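/- arXiv:1409.4621 — 2 statements merged into one kernel-verified Lean document; each statement's English description precedes it below -/
import Mathlib

section
/- Let P be a simple polygon (without holes) and let u and v be the endpoints of an edge of P. Every point y of P with y ≠ u is visible from p_u(y), and every point y with y ≠ v is visible from p_v(y). Consequently, if a guard is placed on each non-leaf vertex of the shortest path trees SPT(u) and SPT(v), then every point of P is visible from at least one of these guards. -/
/-!
The visibility of `y` from its parent is immediate, since the last edge of a geodesic lies in `P`.
The covering statement needs an argument only for points `z` that are not vertices: the parent
`w = p_u(z)` sees `z`, but it may be a leaf of both trees.

Let `w ≠ u` and let `a = p_u(w)`, which is a guard. If `a, w, z` are collinear, then `a` sees `z`.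
Otherwise the path `u … a w z` makes a proper turn at `w`, and because it is taut, the angle
`∠ a w z` contains exterior points arbitrarily close to `w` (`IsGeodesic.extIn`). Hence there are
vertices visible from `w` in this direction (`SimplePolygon.sector`: locally at `w` the boundary
consists of two edges). Let `r` be the first one in angular order, starting from the ray `wz`.
Then the triangle `w z r` is contained in `P`: otherwise, sweeping it from `w`, one would find a
vertex inside it (`SimplePolygon.top`, `SimplePolygon.exists_empty`). Moreover `∠ a w r` still
contains exterior points near `w`. This forces every geodesic from `u` to `r` without repeated
vertices to pass through `w` (`core`). Since `w` sees `r`, the parent `s = p_u(r)` lies on the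
segment `wr`, so that `z` is visible from the guard `s`.

If `w = u`, the same triangle argument is applied to the angle between `uz` and the edge `uv`: it
gives a vertex `r` such that the triangle `u z r` is contained in `P`, and `p_u(r)` lies on `ur`
(`SimplePolygon.covered_of_root`). The point `z = u` itself is seen by `p_v(u)`.

The topological heart is `core`. Suppose that `w` is not on the geodesic to `r`. Followed from their
last common vertex `c`, the geodesics to `w` and to `r` form together with the segment `wr` a closed
path. Take an extreme point `e` of its convex hull other than `c` and `r`. The path makes a proper
turn at `e`, and the angle there contains exterior points near `e`, by tautness or, for `e = w`, by
hypothesis. The path winds around such points once, by a direct computation with arguments of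
complex numbers (`tip`). But a closed path in `P` does not wind around any exterior point
(`wnd_eq_zero`), because the exterior of `P` is connected and unbounded. The connectedness of the
exterior is not part of the definition of a polygon; it is derived from the structure of the
boundary (`SimplePolygon.isPreconnected_compl`): the boundary is connected, and near each of its
points it is the union of two segments, which separate a small disc into two connected pieces, one
interior and one exterior.
-/

open Set

/-- Points of the Euclidean plane. -/
abbrev Pt : Type := EuclideanSpace ℝ (Fin 2)

/-- `z` is visible from `g` inside the region `P`: the segment `gz` lies in `P`. -/
def Visible (P : Set Pt) (g z : Pt) : Prop := segment ℝ g z ⊆ P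

/-- `l` is a polygonal path from `a` to `b` all of whose segments lie in `P`. -/
def IsPathIn (P : Set Pt) (a b : Pt) (l : List Pt) : Prop :=
  l ≠ [] ∧ l.head? = some a ∧ l.getLast? = some b ∧
    l.Chain' (fun p q => segment ℝ p q ⊆ P)

/-- Euclidean length of a polygonal path. -/
noncomputable def pathLen : List Pt → ℝ
  | [] => 0
  | [_] => 0
  | a :: b :: l => dist a b + pathLen (b :: l)

/-- `l` is a Euclidean shortest (geodesic) polygonal path from `a` to `b` inside `P`. -/
def IsGeodesic (P : Set Pt) (a b : Pt) (l : List Pt) : Prop :=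
  IsPathIn P a b l ∧ ∀ l', IsPathIn P a b l' → pathLen l ≤ pathLen l'

/-- A simple polygon (closed region without holes) whose vertices, in clockwise
order, are `vtx 0, vtx 1, …, vtx (n-1)`; in particular `u := vtx 0` is the next
clockwise vertex after `v := vtx (n-1)`, so `uv` is an edge of the polygon.
The fields `pu`, `pv` are the parent maps of the shortest path trees `SPT(u)`
and `SPT(v)`: for a point `x` of `P`, `pu x` is the vertex adjacent to `x` on
the Euclidean shortest path from `u` to `x` inside `P` (and analogously `pv`). -/
structure SimplePolygon where
  /-- number of vertices -/
  n : ℕ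
  three_le : 3 ≤ n
  /-- the vertices in clockwise order (extended periodically) -/
  vtx : ℕ → Pt
  periodic : ∀ i, vtx (i + n) = vtx i
  inj : ∀ i < n, ∀ j < n, vtx i = vtx j → i = j
  /-- the closed polygonal region -/
  P : Set Pt
  compact' : IsCompact P
  connected' : IsConnected P
  regular : P = closure (interior P)
  /-- the topological boundary of the region is the union of the edges -/
  boundary : frontier P = ⋃ i ∈ Finset.range n, segment ℝ (vtx i) (vtx (i + 1))
  /-- simplicity: two distinct edges meet only in common endpoints -/
  simple : ∀ i < n, ∀ j < n, i ≠ j →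
    segment ℝ (vtx i) (vtx (i + 1)) ∩ segment ℝ (vtx j) (vtx (j + 1)) ⊆
      ({vtx i, vtx (i + 1)} ∩ {vtx j, vtx (j + 1)} : Set Pt)
  /-- parent in the shortest path tree rooted at `u = vtx 0` -/
  pu : Pt → Pt
  /-- parent in the shortest path tree rooted at `v = vtx (n-1)` -/
  pv : Pt → Pt
  pu_root : pu (vtx 0) = vtx 0
  pv_root : pv (vtx (n - 1)) = vtx (n - 1)
  pu_spec : ∀ x ∈ P, x ≠ vtx 0 →
    (∃ i < n, pu x = vtx i) ∧ ∃ l, IsGeodesic P (vtx 0) x (l ++ [pu x, x])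
  pv_spec : ∀ x ∈ P, x ≠ vtx (n - 1) →
    (∃ i < n, pv x = vtx i) ∧ ∃ l, IsGeodesic P (vtx (n - 1)) x (l ++ [pv x, x])

namespace SimplePolygon

variable (S : SimplePolygon)

/-- The vertex `u`. -/
def u : Pt := S.vtx 0

/-- The vertex `v` (`u` is the next clockwise vertex after `v`). -/
def v : Pt := S.vtx (S.n - 1)

/-- `x` is a vertex of the polygon. -/
def IsVertex (x : Pt) : Prop := ∃ i < S.n, x = S.vtx i

/-- `P` is weakly visible from the edge `uv`. -/
def WeaklyVisible : Prop := ∀ z ∈ S.P, ∃ w ∈ segment ℝ S.u S.v, Visible S.P w z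

/-- The polygon is orthogonal: every edge is horizontal or vertical. -/
def IsOrthogonal : Prop :=
  ∀ i < S.n, S.vtx i 0 = S.vtx (i + 1) 0 ∨ S.vtx i 1 = S.vtx (i + 1) 1

/-- Clockwise parameterisation of the boundary of `P` by `t ∈ [0, n)`. -/
noncomputable def bdPt (t : ℝ) : Pt :=
  AffineMap.lineMap (S.vtx ⌊t⌋.toNat) (S.vtx (⌊t⌋.toNat + 1)) (Int.fract t)

/-- `bd_c(p,q)`: the clockwise boundary chain of `P` from `p` to `q`. -/
def bdC (p q : Pt) : Set Pt :=
  {x | ∃ a b c : ℝ, a ∈ Set.Ico (0 : ℝ) (S.n : ℝ) ∧ b ∈ Set.Ico (0 : ℝ) (S.n : ℝ) ∧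
    c ∈ Set.Ico (0 : ℝ) (S.n : ℝ) ∧ S.bdPt a = p ∧ S.bdPt b = q ∧ S.bdPt c = x ∧
    ((a ≤ b ∧ a ≤ c ∧ c ≤ b) ∨ (b < a ∧ (a ≤ c ∨ c ≤ b)))}

/-- `bd_cc(p,q)`: the counterclockwise boundary chain of `P` from `p` to `q`. -/
def bdCC (p q : Pt) : Set Pt := S.bdC q p

/-- The visibility polygon `VP(g)` of a point `g` of `P`. -/
def VP (g : Pt) : Set Pt := {q ∈ S.P | Visible S.P g q}

/-- A constructed edge of `VP(s)` through the lid vertex `y`, with lid point `x`: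
the segment from `s` through `y` extended maximally inside `P`, ending on the
boundary of `P` at `x`. -/
def IsConstructedEdge (s y x : Pt) : Prop :=
  S.IsVertex y ∧ s ≠ y ∧ y ≠ x ∧ x ∈ frontier S.P ∧ y ∈ segment ℝ s x ∧
    segment ℝ s x ⊆ S.P ∧
    ∀ x', y ∈ segment ℝ s x' → segment ℝ s x' ⊆ S.P → x' ∈ segment ℝ s x

/-- The region of `P` cut off from `s` by the chord `yx`. -/
def pocket (s y x : Pt) : Set Pt :=
  S.P \ connectedComponentIn (S.P \ segment ℝ y x) s

/-- `Q` is a left pocket of `VP(s)`: it is cut off by a constructed edge `yx`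
whose lid vertex `y` lies on `bd_c(s,x)`. -/
def IsLeftPocket (s : Pt) (Q : Set Pt) : Prop :=
  ∃ y x, S.IsConstructedEdge s y x ∧ y ∈ S.bdC s x ∧ Q = S.pocket s y x

/-- `Q` is a right pocket of `VP(s)`: it is cut off by a constructed edge `yx`
whose lid vertex `y` lies on `bd_cc(s,x)`. -/
def IsRightPocket (s : Pt) (Q : Set Pt) : Prop :=
  ∃ y x, S.IsConstructedEdge s y x ∧ y ∈ S.bdCC s x ∧ Q = S.pocket s y x

/-- An invisible cell relative to the union `U` of visibility polygons of the
guards: a connected component of `P \ U` with nonempty interior. -/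
def InvisCell (U C : Set Pt) : Prop :=
  (∃ x ∈ S.P \ U, C = connectedComponentIn (S.P \ U) x) ∧ (interior C).Nonempty

end SimplePolygon

/-! ### Cross products, affine coordinates and segments -/

/-- The planar cross product `p × q`; it vanishes exactly for linearly dependent vectors. -/
def cr (p q : Pt) : ℝ := p 0 * q 1 - p 1 * q 0

/-- Cramer's rule in the basis `e₁, e₂`. -/
theorem cr_basis {e₁ e₂ : Pt} (h : cr e₁ e₂ ≠ 0) (y : Pt) :
    y = (cr y e₂ / cr e₁ e₂) • e₁ + (cr e₁ y / cr e₁ e₂) • e₂ := by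
  have h' := h
  unfold cr at h'
  ext i
  fin_cases i <;>
    simp only [cr, PiLp.add_apply, PiLp.smul_apply, smul_eq_mul, Fin.zero_eta, Fin.mk_one] <;>
    rw [div_mul_eq_mul_div, div_mul_eq_mul_div, ← add_div, eq_div_iff h'] <;> ring

theorem cr_exists_coords {e₁ e₂ : Pt} (h : cr e₁ e₂ ≠ 0) (w y : Pt) :
    ∃ α β : ℝ, y = w + α • e₁ + β • e₂ :=
  ⟨_, _, by rw [add_assoc, ← cr_basis h (y - w)]; abel⟩

theorem cr_coords_left (a b : ℝ) (e₁ e₂ : Pt) : cr (a • e₁ + b • e₂) e₂ = a * cr e₁ e₂ := by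
  simp [cr]; ring

theorem cr_coords_right (a b : ℝ) (e₁ e₂ : Pt) : cr e₁ (a • e₁ + b • e₂) = b * cr e₁ e₂ := by
  simp [cr]; ring

theorem cr_coords_inj {e₁ e₂ w : Pt} (h : cr e₁ e₂ ≠ 0) {a b a' b' : ℝ}
    (H : w + a • e₁ + b • e₂ = w + a' • e₁ + b' • e₂) : a = a' ∧ b = b' := by
  rw [add_assoc, add_assoc, add_right_inj] at H
  constructor
  · have := congrArg (fun x => cr x e₂) H
    simp only [cr_coords_left] at this
    exact mul_right_cancel₀ h this
  · have := congrArg (fun x => cr e₁ x) H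
    simp only [cr_coords_right] at this
    exact mul_right_cancel₀ h this

theorem cr_add_right (d x y : Pt) : cr d (x + y) = cr d x + cr d y := by simp [cr]; ring
theorem cr_smul_right (d x : Pt) (t : ℝ) : cr d (t • x) = t * cr d x := by simp [cr]; ring
theorem cr_smul_left (d x : Pt) (t : ℝ) : cr (t • d) x = t * cr d x := by simp [cr]; ring
theorem cr_neg_left (d x : Pt) : cr (-d) x = - cr d x := by simp [cr]; ring
theorem cr_self (d : Pt) : cr d d = 0 := by simp [cr]; ring
theorem cr_swap (d x : Pt) : cr d x = - cr x d := by simp [cr]; ring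

theorem pt_ne_zero {d : Pt} (h : d ≠ 0) : d 0 ≠ 0 ∨ d 1 ≠ 0 := by
  by_contra! H
  apply h
  ext i
  fin_cases i
  · exact H.1
  · exact H.2

/-- Two vectors with vanishing cross product are proportional. -/
theorem eq_smul_of_cr_eq_zero {d x : Pt} (hd : d ≠ 0) (h : cr d x = 0) : ∃ t : ℝ, x = t • d := by
  rcases pt_ne_zero hd with h0 | h0
  · refine ⟨x 0 / d 0, ?_⟩
    ext i
    fin_cases i <;> simp [cr] at * <;> field_simp; linarith
  · refine ⟨x 1 / d 1, ?_⟩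
    ext i
    fin_cases i <;> simp [cr] at * <;> field_simp; linarith

theorem isClosed_segment (a b : Pt) : IsClosed (segment ℝ a b) := by
  rw [segment_eq_image']
  exact (isCompact_Icc.image (by fun_prop)).isClosed

theorem continuous_cr (d o : Pt) : Continuous fun y : Pt => cr d (y - o) := by
  unfold cr; fun_prop

theorem add_smul_mem_segment {o d : Pt} {t s : ℝ} (h0 : 0 ≤ t) (h1 : t ≤ s) :
    o + t • d ∈ segment ℝ o (o + s • d) := by
  rcases eq_or_lt_of_le (h0.trans h1) with hs | hs
  · have : t = 0 := by linarith
    subst this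
    simpa using left_mem_segment ℝ o _
  · rw [segment_eq_image']
    refine ⟨t / s, ⟨by positivity, by rw [div_le_one hs]; exact h1⟩, ?_⟩
    simp [smul_smul, div_mul_cancel₀ _ hs.ne']

theorem add_smul_mem_segment' {o d : Pt} {t s : ℝ} (h0 : t ≤ 0) (h1 : s ≤ t) :
    o + t • d ∈ segment ℝ o (o + s • d) := by
  have := add_smul_mem_segment (o := o) (d := -d) (t := -t) (s := -s) (by linarith) (by linarith)
  rwa [smul_neg, neg_smul, neg_neg, smul_neg, neg_smul, neg_neg] at this

theorem mem_segment_iff_add {o p x : Pt} :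
    x ∈ segment ℝ o p ↔ ∃ t : ℝ, 0 ≤ t ∧ t ≤ 1 ∧ x = o + t • (p - o) := by
  rw [segment_eq_image']
  constructor
  · rintro ⟨t, ht, rfl⟩; exact ⟨t, ht.1, ht.2, rfl⟩
  · rintro ⟨t, h0, h1, rfl⟩; exact ⟨t, ⟨h0, h1⟩, rfl⟩

/-- If `a, w, z` are collinear, in any order, then `[a,z] ⊆ [a,w] ∪ [w,z]`. -/
theorem segment_subset_of_collinear {a w z : Pt} (h : cr (a - w) (z - w) = 0) :
    segment ℝ a z ⊆ segment ℝ a w ∪ segment ℝ w z := by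
  by_cases ha : a = w
  · subst ha; exact subset_union_right
  obtain ⟨t, ht⟩ := eq_smul_of_cr_eq_zero (sub_ne_zero.2 ha) h
  intro x hx
  obtain ⟨s, s0, s1, rfl⟩ := mem_segment_iff_add.1 hx
  have hz : z = w + t • (a - w) := by rw [← ht]; abel
  -- the abscissa of the point relative to `w` and `a - w`
  have key : a + s • (z - a) = w + ((1 - s) + s * t) • (a - w) := by
    rw [hz]; module
  rw [key]
  rcases le_total 0 ((1 - s) + s * t) with hc | hc
  · by_cases h1 : (1 - s) + s * t ≤ 1
    · left
      rw [segment_symm]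
      exact mem_segment_iff_add.2 ⟨_, hc, h1, rfl⟩
    · right
      have ht1 : 1 < t := by
        by_contra! hcon
        nlinarith
      have hst : (1 - s) + s * t ≤ t := by nlinarith
      rw [hz]
      exact add_smul_mem_segment hc hst
  · right
    have ht1 : t ≤ 1 := by
      by_contra! hcon
      nlinarith
    have hst : t ≤ (1 - s) + s * t := by nlinarith
    rw [hz]
    exact add_smul_mem_segment' hc hst

/-! ### The boundary near one of its points -/

namespace SimplePolygon

variable (S : SimplePolygon)

theorem isClosed_P : IsClosed S.P := S.compact'.isClosed

theorem frontier_subset : frontier S.P ⊆ S.P := S.isClosed_P.frontier_subset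

theorem edge_subset {i : ℕ} (hi : i < S.n) :
    segment ℝ (S.vtx i) (S.vtx (i + 1)) ⊆ frontier S.P := by
  rw [S.boundary]
  exact subset_biUnion_of_mem (u := fun i => segment ℝ (S.vtx i) (S.vtx (i + 1)))
    (Finset.mem_coe.2 (Finset.mem_range.2 hi))

theorem exists_edge {x : Pt} (hx : x ∈ frontier S.P) :
    ∃ i < S.n, x ∈ segment ℝ (S.vtx i) (S.vtx (i + 1)) := by
  rw [S.boundary] at hx
  simpa using hx

theorem isVertex_succ {i : ℕ} (hi : i < S.n) : S.IsVertex (S.vtx (i + 1)) := by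
  rcases Nat.lt_or_ge (i + 1) S.n with h | h
  · exact ⟨_, h, rfl⟩
  · have : i + 1 = 0 + S.n := by omega
    exact ⟨0, by omega, by rw [this, S.periodic]⟩

theorem vtx_mem {x : Pt} (hx : S.IsVertex x) : x ∈ frontier S.P := by
  obtain ⟨i, hi, rfl⟩ := hx
  exact S.edge_subset hi (left_mem_segment ℝ _ _)

theorem vtx_succ_eq {i j : ℕ} (hi : i < S.n) (hj : j < S.n) (h : S.vtx (j + 1) = S.vtx i) :
    j + 1 = i ∨ (j + 1 = S.n ∧ i = 0) := by
  rcases Nat.lt_or_ge (j + 1) S.n with h' | h'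
  · exact Or.inl (S.inj _ h' _ hi h)
  · have e : j + 1 = 0 + S.n := by omega
    rw [e, S.periodic] at h
    have := S.inj 0 (by omega) i hi h
    omega

open Classical in
/-- Near any point `o`, the boundary consists of parts of edges through `o`. -/
theorem exists_ball_edges (o : Pt) : ∃ ε > 0, ∀ y ∈ frontier S.P, dist y o < ε →
    ∃ i < S.n, o ∈ segment ℝ (S.vtx i) (S.vtx (i + 1)) ∧
      y ∈ segment ℝ (S.vtx i) (S.vtx (i + 1)) := by
  set C : Set Pt := ⋃ i ∈ (Finset.range S.n).filter
    (fun i => o ∉ segment ℝ (S.vtx i) (S.vtx (i + 1))), segment ℝ (S.vtx i) (S.vtx (i + 1)) with hC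
  have hCc : IsClosed C := by
    apply Set.Finite.isClosed_biUnion (Finset.finite_toSet _)
    intro i _
    exact isClosed_segment _ _
  have ho : o ∈ Cᶜ := by simp [hC]
  obtain ⟨ε, hε, hb⟩ := Metric.isOpen_iff.1 hCc.isOpen_compl o ho
  refine ⟨ε, hε, fun y hy hd => ?_⟩
  obtain ⟨i, hi, hyi⟩ := S.exists_edge hy
  refine ⟨i, hi, ?_, hyi⟩
  by_contra hcon
  apply hb hd
  simp only [hC, mem_iUnion]
  exact ⟨i, by simp [hi, hcon], hyi⟩

/-- The boundary near one of its points `o` is the union of two segments `op`, `oq` that issue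
from `o` and meet only there. Here `p, q` are the neighbouring vertices if `o` is a vertex, and the
endpoints of the edge through `o` otherwise. -/
theorem local_frontier {o : Pt} (ho : o ∈ frontier S.P) :
    ∃ p q : Pt, ∃ ε > 0, p ≠ o ∧ q ≠ o ∧ segment ℝ o p ⊆ frontier S.P ∧
      segment ℝ o q ⊆ frontier S.P ∧ segment ℝ o p ∩ segment ℝ o q ⊆ {o} ∧
      (∀ y ∈ frontier S.P, dist y o < ε → y ∈ segment ℝ o p ∪ segment ℝ o q) ∧
      (S.IsVertex o → S.IsVertex p ∧ S.IsVertex q) ∧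
      (¬ S.IsVertex o → S.IsVertex p ∧ S.IsVertex q ∧ o ∈ segment ℝ p q ∧
        segment ℝ p q ⊆ frontier S.P) := by
  obtain ⟨ε, hε, hb⟩ := S.exists_ball_edges o
  have hn := S.three_le
  by_cases hv : S.IsVertex o
  · obtain ⟨i, hi, rfl⟩ := hv
    obtain ⟨i', hi', hne, hs, hor⟩ : ∃ i' < S.n, i' ≠ i ∧ S.vtx (i' + 1) = S.vtx i ∧
        ((i' + 1 = i) ∨ (i' + 1 = S.n ∧ i = 0)) := by
      rcases Nat.eq_zero_or_pos i with h | h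
      · refine ⟨S.n - 1, by omega, by omega, ?_, Or.inr (by omega)⟩
        have : S.n - 1 + 1 = 0 + S.n := by omega
        rw [this, S.periodic, h]
      · exact ⟨i - 1, by omega, by omega, by congr 1; omega, Or.inl (by omega)⟩
    have hs' : segment ℝ (S.vtx i) (S.vtx i') = segment ℝ (S.vtx i') (S.vtx (i' + 1)) := by
      rw [hs, segment_symm]
    refine ⟨S.vtx (i + 1), S.vtx i', ε, hε, ?_, ?_, S.edge_subset hi, ?_, ?_, ?_, ?_, ?_⟩
    · intro h
      have := S.vtx_succ_eq hi hi h
      omega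
    · intro h
      exact hne (S.inj _ hi' _ hi h)
    · rw [hs']; exact S.edge_subset hi'
    · rw [hs']
      intro x hx
      have := S.simple i hi i' hi' (Ne.symm hne) hx
      simp only [mem_inter_iff, mem_insert_iff, mem_singleton_iff] at this ⊢
      rcases this with ⟨h1 | h1, h2⟩
      · exact h1
      · rcases h2 with h2 | h2
        · have := S.vtx_succ_eq hi' hi (h1.symm.trans h2)
          omega
        · rw [h2, hs]
    · intro y hy hd
      obtain ⟨j, hj, hoj, hyj⟩ := hb y hy hd
      by_cases hji : j = i
      · subst hji; exact Or.inl hyj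
      · right
        have := (S.simple i hi j hj (Ne.symm hji) ⟨left_mem_segment ℝ _ _, hoj⟩).2
        simp only [mem_insert_iff, mem_singleton_iff] at this
        rcases this with h | h
        · exact absurd (S.inj _ hi _ hj h).symm hji
        · have := S.vtx_succ_eq hi hj h.symm
          have : j = i' := by omega
          subst this
          rw [hs']; exact hyj
    · exact fun _ => ⟨S.isVertex_succ hi, ⟨i', hi', rfl⟩⟩
    · exact fun h => absurd ⟨i, hi, rfl⟩ h
  · obtain ⟨i, hi, hoi⟩ := S.exists_edge ho
    have hp : S.vtx i ≠ o := fun h => hv ⟨i, hi, h.symm⟩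
    have hq : S.vtx (i + 1) ≠ o := fun h => hv (h ▸ S.isVertex_succ hi)
    have sub1 : segment ℝ o (S.vtx i) ⊆ segment ℝ (S.vtx i) (S.vtx (i + 1)) :=
      (convex_segment _ _).segment_subset hoi (left_mem_segment ℝ _ _)
    have sub2 : segment ℝ o (S.vtx (i + 1)) ⊆ segment ℝ (S.vtx i) (S.vtx (i + 1)) :=
      (convex_segment _ _).segment_subset hoi (right_mem_segment ℝ _ _)
    obtain ⟨t, t0, t1, ht⟩ := mem_segment_iff_add.1 hoi
    have hd : S.vtx (i + 1) - S.vtx i ≠ 0 := by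
      intro h; rw [h] at ht; simp at ht; exact hp ht.symm
    have ht0 : 0 < t := lt_of_le_of_ne t0 (by
      rintro rfl; simp at ht; exact hp ht.symm)
    have ht1 : t < 1 := lt_of_le_of_ne t1 (by
      rintro rfl; simp at ht; exact hq ht.symm)
    have e1 : S.vtx i = o + (-t) • (S.vtx (i + 1) - S.vtx i) := by rw [ht]; module
    have e2 : S.vtx (i + 1) = o + (1 - t) • (S.vtx (i + 1) - S.vtx i) := by
      rw [ht]; module
    refine ⟨S.vtx i, S.vtx (i + 1), ε, hε, hp, hq, sub1.trans (S.edge_subset hi),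
      sub2.trans (S.edge_subset hi), ?_, ?_, fun h => absurd h hv, fun _ =>
      ⟨⟨i, hi, rfl⟩, S.isVertex_succ hi, hoi, S.edge_subset hi⟩⟩
    · rintro x ⟨hx1, hx2⟩
      obtain ⟨a, a0, a1, ha⟩ := mem_segment_iff_add.1 hx1
      obtain ⟨b, b0, b1, hb'⟩ := mem_segment_iff_add.1 hx2
      have h1 : x = o + (-(a * t)) • (S.vtx (i + 1) - S.vtx i) := by
        rw [ha]
        have : S.vtx i - o = (-t) • (S.vtx (i + 1) - S.vtx i) := by
          nth_rewrite 1 [e1]; abel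
        rw [this, smul_smul]; congr 2; ring
      have h2 : x = o + (b * (1 - t)) • (S.vtx (i + 1) - S.vtx i) := by
        rw [hb']
        have : S.vtx (i + 1) - o = (1 - t) • (S.vtx (i + 1) - S.vtx i) := by
          nth_rewrite 1 [e2]; abel
        rw [this, smul_smul]
      have h3 : (-(a * t)) = b * (1 - t) := by
        have := h1.symm.trans h2
        rw [add_right_inj] at this
        exact smul_left_injective ℝ hd this
      have : a * t = 0 := by nlinarith [mul_nonneg a0 t0, mul_nonneg b0 (by linarith : 0 ≤ 1 - t)]
      rw [this] at h1
      simpa using h1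
    · intro y hy hyd
      obtain ⟨j, hj, hoj, hyj⟩ := hb y hy hyd
      have hji : j = i := by
        by_contra hji
        have := (S.simple i hi j hj (Ne.symm hji) ⟨hoi, hoj⟩).1
        simp only [mem_insert_iff, mem_singleton_iff] at this
        rcases this with h | h
        · exact hp h.symm
        · exact hq h.symm
      subst hji
      obtain ⟨s, s0, s1, hs⟩ := mem_segment_iff_add.1 hyj
      have hy : y = o + (s - t) • (S.vtx (j + 1) - S.vtx j) := by rw [hs, ht]; module
      rcases le_total s t with h | h
      · left
        rw [e1, hy]
        exact add_smul_mem_segment' (by linarith) (by linarith)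
      · right
        rw [e2, hy]
        exact add_smul_mem_segment (by linarith) (by linarith)

end SimplePolygon

theorem exists_small (v : Pt) {ε : ℝ} (hε : 0 < ε) :
    ∃ δ > 0, ∀ t : ℝ, |t| ≤ δ → ∀ o : Pt, dist (o + t • v) o < ε := by
  refine ⟨ε / (‖v‖ + 1), by positivity, fun t ht o => ?_⟩
  rw [dist_eq_norm, add_sub_cancel_left, norm_smul, Real.norm_eq_abs]
  calc |t| * ‖v‖ ≤ ε / (‖v‖ + 1) * ‖v‖ := by gcongr
    _ < ε / (‖v‖ + 1) * (‖v‖ + 1) := by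
      have : 0 < ε / (‖v‖ + 1) := by positivity
      nlinarith
    _ = ε := by field_simp

/-- The open half-plane to the left of the line through `o` with direction `d`. -/
def halfPlane (d o : Pt) : Set Pt := {y | 0 < cr d (y - o)}

theorem convex_halfPlane (d o : Pt) : Convex ℝ (halfPlane d o) := by
  intro x hx y hy a b ha hb hab
  have e : cr d (a • x + b • y - o) = a * cr d (x - o) + b * cr d (y - o) := by
    have : b = 1 - a := by linarith
    subst this
    simp [cr]; ring
  simp only [halfPlane, mem_ofPred_eq] at *
  rw [e]
  rcases eq_or_lt_of_le ha with h | h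
  · subst h
    have : b = 1 := by linarith
    subst this; simpa using hy
  · have := mul_pos h hx
    have := mul_nonneg hb hy.le
    linarith

/-- Membership of a point of a ray in the segment it spans, by a distance bound. -/
theorem ray_mem_segment {o p : Pt} {t : ℝ} (ht : 0 ≤ t)
    (h : dist (o + t • (p - o)) o ≤ dist p o) : o + t • (p - o) ∈ segment ℝ o p := by
  by_cases hp : p = o
  · subst hp; simpa using left_mem_segment ℝ p p
  refine mem_segment_iff_add.2 ⟨t, ht, ?_, rfl⟩
  rw [dist_eq_norm, add_sub_cancel_left, norm_smul, Real.norm_eq_abs, abs_of_nonneg ht,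
    dist_eq_norm] at h
  have : 0 < ‖p - o‖ := norm_pos_iff.2 (sub_ne_zero.2 hp)
  nlinarith

namespace SimplePolygon

variable (S : SimplePolygon)

/-- A connected set that avoids the boundary lies in the exterior or in the interior. -/
theorem ext_or_int {C : Set Pt} (hC : IsPreconnected C) (hd : ∀ x ∈ C, x ∉ frontier S.P) :
    C ⊆ S.Pᶜ ∨ C ⊆ interior S.P := by
  refine isPreconnected_iff_subset_of_disjoint.1 hC _ _ S.isClosed_P.isOpen_compl isOpen_interior
    ?_ ?_
  · intro x hx
    by_cases h : x ∈ S.P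
    · right
      by_contra hi
      exact hd x hx (by rw [S.isClosed_P.frontier_eq]; exact ⟨h, hi⟩)
    · exact Or.inl h
  · ext x
    simp only [mem_inter_iff, mem_compl_iff, mem_empty_iff_false, iff_false, not_and]
    exact fun _ h1 h2 => h1 (interior_subset h2)

theorem mem_frontier_of_closure {x : Pt} (hx : x ∈ S.P) (h : x ∈ closure S.Pᶜ) :
    x ∈ frontier S.P := by
  rw [frontier_eq_closure_inter_closure]
  exact ⟨subset_closure hx, h⟩

/-- If the boundary cuts a disc about a boundary point into two connected pieces, then one of
them is interior and the other contains all exterior points of the disc. -/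
theorem two_sides {o : Pt} (ho : o ∈ frontier S.P) {ε : ℝ} (hε : 0 < ε) {S₁ S₂ : Set Pt}
    (h1 : IsPreconnected S₁) (h2 : IsPreconnected S₂)
    (d1 : ∀ x ∈ S₁, x ∉ frontier S.P) (d2 : ∀ x ∈ S₂, x ∉ frontier S.P)
    (hc : Metric.ball o ε ⊆ S₁ ∪ S₂ ∪ frontier S.P) :
    (S₁ ⊆ interior S.P ∧ S₂ ⊆ S.Pᶜ) ∨ (S₂ ⊆ interior S.P ∧ S₁ ⊆ S.Pᶜ) := by
  have hreg : o ∈ closure (interior S.P) := by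
    rw [← S.regular]; exact S.frontier_subset ho
  obtain ⟨x, hx, hxd⟩ := Metric.mem_closure_iff.1 hreg ε hε
  have hext : o ∈ closure S.Pᶜ := by
    rw [frontier_eq_closure_inter_closure] at ho; exact ho.2
  obtain ⟨y, hy, hyd⟩ := Metric.mem_closure_iff.1 hext ε hε
  have hxF : x ∉ frontier S.P := fun h => by
    rw [S.isClosed_P.frontier_eq] at h; exact h.2 hx
  have hyF : y ∉ frontier S.P := fun h => hy (S.frontier_subset h)
  have hxU := hc (show x ∈ Metric.ball o ε by rwa [Metric.mem_ball, dist_comm])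
  have hyU := hc (show y ∈ Metric.ball o ε by rwa [Metric.mem_ball, dist_comm])
  rcases S.ext_or_int h1 d1 with e1 | e1 <;> rcases S.ext_or_int h2 d2 with e2 | e2
  · exfalso
    rcases hxU with (h | h) | h
    · exact e1 h (interior_subset hx)
    · exact e2 h (interior_subset hx)
    · exact hxF h
  · exact Or.inr ⟨e2, e1⟩
  · exact Or.inl ⟨e1, e2⟩
  · exfalso
    rcases hyU with (h | h) | h
    · exact hy (interior_subset (e1 h))
    · exact hy (interior_subset (e2 h))
    · exact hyF h

/-- In the situation of `two_sides`, the exterior part of the disc is one of the two pieces, and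
hence connected. -/
theorem exterior_preconnected_of_two_sides {o : Pt} (ho : o ∈ frontier S.P) {ε : ℝ} (hε : 0 < ε)
    {S₁ S₂ : Set Pt} (h1 : IsPreconnected S₁) (h2 : IsPreconnected S₂)
    (d1 : ∀ x ∈ S₁, x ∉ frontier S.P) (d2 : ∀ x ∈ S₂, x ∉ frontier S.P)
    (b1 : S₁ ⊆ Metric.ball o ε) (b2 : S₂ ⊆ Metric.ball o ε)
    (hc : Metric.ball o ε ⊆ S₁ ∪ S₂ ∪ frontier S.P) :
    IsPreconnected (Metric.ball o ε ∩ S.Pᶜ) := by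
  rcases S.two_sides ho hε h1 h2 d1 d2 hc with ⟨e1, e2⟩ | ⟨e1, e2⟩
  · have : Metric.ball o ε ∩ S.Pᶜ = S₂ := by
      apply Subset.antisymm
      · rintro x ⟨hx, hxP⟩
        rcases hc hx with (h | h) | h
        · exact absurd (interior_subset (e1 h)) hxP
        · exact h
        · exact absurd (S.frontier_subset h) hxP
      · exact fun x hx => ⟨b2 hx, e2 hx⟩
    rwa [this]
  · have : Metric.ball o ε ∩ S.Pᶜ = S₁ := by
      apply Subset.antisymm
      · rintro x ⟨hx, hxP⟩
        rcases hc hx with (h | h) | h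
        · exact h
        · exact absurd (interior_subset (e1 h)) hxP
        · exact absurd (S.frontier_subset h) hxP
      · exact fun x hx => ⟨b1 hx, e2 hx⟩
    rwa [this]

/-- The case in which the two boundary segments at `o` are opposite: the boundary is locally a
line through `o`, and the two half-discs lie on different sides of it. -/
theorem straight_sides {o p q : Pt} {ε : ℝ} (hε : 0 < ε) (hp : p ≠ o) (hq : q ≠ o)
    (sp : segment ℝ o p ⊆ frontier S.P) (sq : segment ℝ o q ⊆ frontier S.P)
    (hi : segment ℝ o p ∩ segment ℝ o q ⊆ {o})
    (hb : ∀ y ∈ frontier S.P, dist y o < ε → y ∈ segment ℝ o p ∪ segment ℝ o q)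
    (hcol : cr (p - o) (q - o) = 0) (hεp : ε ≤ dist p o) (hεq : ε ≤ dist q o) :
    ∀ y, dist y o < ε → (y ∈ frontier S.P ↔ cr (p - o) (y - o) = 0) := by
  obtain ⟨c, hc⟩ := eq_smul_of_cr_eq_zero (sub_ne_zero.2 hp) hcol
  have hq' : q = o + c • (p - o) := by rw [← hc]; abel
  have hc0 : c ≠ 0 := by rintro rfl; apply hq; simpa using hq'
  have hneg : c < 0 := by
    by_contra! hpos
    have hpos : 0 < c := lt_of_le_of_ne hpos (Ne.symm hc0)
    -- otherwise both segments would contain a common initial piece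
    set m := min 1 c
    have hm : 0 < m := lt_min one_pos hpos
    have h1 : o + m • (p - o) ∈ segment ℝ o p :=
      mem_segment_iff_add.2 ⟨m, hm.le, min_le_left _ _, rfl⟩
    have h2 : o + m • (p - o) ∈ segment ℝ o q := by
      rw [hq']; exact add_smul_mem_segment hm.le (min_le_right _ _)
    have := hi ⟨h1, h2⟩
    simp only [mem_singleton_iff, add_eq_left, smul_eq_zero] at this
    rcases this with h | h
    · exact hm.ne' h
    · exact hp (sub_eq_zero.1 h)
  intro y hy
  constructor
  · intro hyF
    rcases hb y hyF hy with h | h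
    · obtain ⟨t, -, -, rfl⟩ := mem_segment_iff_add.1 h
      simp [cr_smul_right, cr_self]
    · obtain ⟨t, -, -, rfl⟩ := mem_segment_iff_add.1 h
      simp [cr_smul_right, hcol]
  · intro h
    obtain ⟨t, ht⟩ := eq_smul_of_cr_eq_zero (sub_ne_zero.2 hp) h
    have hy' : y = o + t • (p - o) := by rw [← ht]; abel
    rcases le_total 0 t with h0 | h0
    · apply sp
      rw [hy']
      exact ray_mem_segment h0 (by rw [← hy']; linarith)
    · apply sq
      have e : y = o + (t / c) • (q - o) := by
        rw [hy', hc, smul_smul, div_mul_cancel₀ _ hc0]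
      rw [e]
      exact ray_mem_segment (div_nonneg_of_nonpos h0 hneg.le) (by rw [← e]; linarith)

theorem cover_of_straight {o p : Pt} {ε : ℝ}
    (H : ∀ y, dist y o < ε → (y ∈ frontier S.P ↔ cr (p - o) (y - o) = 0)) :
    Metric.ball o ε ⊆ (halfPlane (p - o) o ∩ Metric.ball o ε) ∪
      (halfPlane (-(p - o)) o ∩ Metric.ball o ε) ∪ frontier S.P := by
  intro y hy
  rcases lt_trichotomy (cr (p - o) (y - o)) 0 with h | h | h
  · left; right
    refine ⟨?_, hy⟩
    simp only [halfPlane, mem_ofPred_eq, cr_neg_left]; linarith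
  · right; exact (H y hy).2 h
  · left; left; exact ⟨h, hy⟩

/-- At a boundary point which is not a vertex, the region is locally a closed half-plane. -/
theorem local_half {o : Pt} (ho : o ∈ frontier S.P) (hv : ¬ S.IsVertex o) :
    ∃ d : Pt, d ≠ 0 ∧ ∃ ε > 0, (∀ y, dist y o < ε → (y ∉ S.P ↔ 0 < cr d (y - o))) ∧
      ∃ p q, S.IsVertex p ∧ S.IsVertex q ∧ segment ℝ p q ⊆ frontier S.P ∧ o ∈ segment ℝ p q ∧
        cr d (p - o) = 0 ∧ cr d (q - o) = 0 := by
  obtain ⟨p, q, ε₀, hε₀, hp, hq, sp, sq, hi, hb, -, hnv⟩ := S.local_frontier ho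
  obtain ⟨vp, vq, hopq, spq⟩ := hnv hv
  set ε := min ε₀ (min (dist p o) (dist q o)) with hεdef
  have hε : 0 < ε := lt_min hε₀ (lt_min (dist_pos.2 hp) (dist_pos.2 hq))
  have hcol : cr (p - o) (q - o) = 0 := by
    obtain ⟨t, -, -, ht⟩ := mem_segment_iff_add.1 hopq
    rw [ht]; simp [cr]; ring
  have H := S.straight_sides hε hp hq sp sq hi
    (fun y hy hd => hb y hy (hd.trans_le (min_le_left _ _))) hcol
    ((min_le_right _ _).trans (min_le_left _ _)) ((min_le_right _ _).trans (min_le_right _ _))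
  have hne : ∀ d, (d = p - o ∨ d = -(p - o)) →
      ∀ x ∈ halfPlane d o ∩ Metric.ball o ε, x ∉ frontier S.P := by
    rintro d hd x ⟨hx, hxb⟩ hxF
    have := (H x hxb).1 hxF
    simp only [halfPlane, mem_ofPred_eq] at hx
    rcases hd with rfl | rfl
    · linarith
    · rw [cr_neg_left] at hx; linarith
  have hpc : ∀ d, IsPreconnected (halfPlane d o ∩ Metric.ball o ε) := fun d =>
    ((convex_halfPlane d o).inter (convex_ball o ε)).isPreconnected
  have key : ∀ d, (d = p - o ∨ d = -(p - o)) → halfPlane d o ∩ Metric.ball o ε ⊆ S.Pᶜ →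
      halfPlane (-d) o ∩ Metric.ball o ε ⊆ interior S.P →
      ∀ y, dist y o < ε → (y ∉ S.P ↔ 0 < cr d (y - o)) := by
    intro d hd h1 h2 y hy
    constructor
    · intro hyP
      by_contra! hcon
      rcases eq_or_lt_of_le hcon with h | h
      · apply hyP
        apply S.frontier_subset
        rw [H y hy]
        rcases hd with rfl | rfl
        · exact h
        · rw [cr_neg_left] at h; linarith
      · apply hyP
        apply interior_subset
        apply h2
        refine ⟨?_, hy⟩
        simp only [halfPlane, mem_ofPred_eq, cr_neg_left]; linarith
    · intro h
      exact h1 ⟨h, hy⟩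
  have hpo : p - o ≠ 0 := sub_ne_zero.2 hp
  rcases S.two_sides ho hε (hpc (p - o)) (hpc (-(p - o))) (hne _ (Or.inl rfl)) (hne _ (Or.inr rfl))
    (S.cover_of_straight H) with ⟨e1, e2⟩ | ⟨e1, e2⟩
  · refine ⟨-(p - o), neg_ne_zero.2 hpo, ε, hε, key _ (Or.inr rfl) e2 (by rwa [neg_neg]), p, q, vp, vq,
      spq, hopq, ?_, ?_⟩
    · rw [cr_neg_left, cr_self, neg_zero]
    · rw [cr_neg_left, hcol, neg_zero]
  · exact ⟨p - o, hpo, ε, hε, key _ (Or.inl rfl) e2 e1, p, q, vp, vq, spq, hopq, cr_self _, hcol⟩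

/-- Near every boundary point the exterior is connected. -/
theorem local_exterior {o : Pt} (ho : o ∈ frontier S.P) :
    ∃ ε > 0, IsPreconnected (Metric.ball o ε ∩ S.Pᶜ) := by
  obtain ⟨p, q, ε₀, hε₀, hp, hq, sp, sq, hi, hb, -, -⟩ := S.local_frontier ho
  set ε := min ε₀ (min (dist p o) (dist q o)) with hεdef
  have hε : 0 < ε := lt_min hε₀ (lt_min (dist_pos.2 hp) (dist_pos.2 hq))
  have hεp : ε ≤ dist p o := (min_le_right _ _).trans (min_le_left _ _)
  have hεq : ε ≤ dist q o := (min_le_right _ _).trans (min_le_right _ _)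
  have hb' : ∀ y ∈ frontier S.P, dist y o < ε → y ∈ segment ℝ o p ∪ segment ℝ o q :=
    fun y hy hd => hb y hy (hd.trans_le (min_le_left _ _))
  refine ⟨ε, hε, ?_⟩
  have hpc : ∀ d, Convex ℝ (halfPlane d o ∩ Metric.ball o ε) := fun d =>
    (convex_halfPlane d o).inter (convex_ball o ε)
  by_cases hcol : cr (p - o) (q - o) = 0
  · have H := S.straight_sides hε hp hq sp sq hi hb' hcol hεp hεq
    refine S.exterior_preconnected_of_two_sides ho hε (hpc (p - o)).isPreconnected
      (hpc (-(p - o))).isPreconnected ?_ ?_ inter_subset_right inter_subset_right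
      (S.cover_of_straight H)
    · rintro x ⟨hx, hxb⟩ hxF
      have := (H x hxb).1 hxF
      simp only [halfPlane, mem_ofPred_eq] at hx
      linarith
    · rintro x ⟨hx, hxb⟩ hxF
      have := (H x hxb).1 hxF
      simp only [halfPlane, mem_ofPred_eq, cr_neg_left] at hx
      linarith
  · -- with respect to the basis `p - o, q - o`, the two pieces are the open quadrant and the
    -- complement of the closed quadrant
    set e₁ := p - o with he₁
    set e₂ := q - o with he₂
    set D := cr e₁ e₂ with hD
    have hD2 : 0 < D * D := mul_self_pos.2 hcol
    have ca : ∀ a b : ℝ, cr (D • e₂) (o + a • e₁ + b • e₂ - o) = -(a * (D * D)) := by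
      intro a b; rw [hD]; simp [cr]; ring
    have cb : ∀ a b : ℝ, cr (D • e₁) (o + a • e₁ + b • e₂ - o) = b * (D * D) := by
      intro a b; rw [hD]; simp [cr]; ring
    have front : ∀ a b : ℝ, dist (o + a • e₁ + b • e₂) o < ε →
        (o + a • e₁ + b • e₂ ∈ frontier S.P ↔ (0 ≤ a ∧ b = 0) ∨ (a = 0 ∧ 0 ≤ b)) := by
      intro a b hd
      constructor
      · intro hF
        rcases hb' _ hF hd with h | h
        · obtain ⟨t, t0, -, ht⟩ := mem_segment_iff_add.1 h
          have := cr_coords_inj (a' := t) (b' := 0) hcol (by rw [ht, zero_smul, add_zero])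
          left; exact ⟨this.1 ▸ t0, this.2⟩
        · obtain ⟨t, t0, -, ht⟩ := mem_segment_iff_add.1 h
          have := cr_coords_inj (a' := 0) (b' := t) hcol (by rw [ht, zero_smul, add_zero])
          right; exact ⟨this.1, this.2 ▸ t0⟩
      · rintro (⟨h0, rfl⟩ | ⟨rfl, h0⟩)
        · rw [zero_smul, add_zero] at hd ⊢
          exact sp (ray_mem_segment h0 (by linarith))
        · rw [zero_smul, add_zero] at hd ⊢
          exact sq (ray_mem_segment h0 (by linarith))
    refine S.exterior_preconnected_of_two_sides ho hε
      (S₁ := halfPlane (-(D • e₂)) o ∩ (halfPlane (D • e₁) o ∩ Metric.ball o ε))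
      (S₂ := halfPlane (D • e₂) o ∩ Metric.ball o ε ∪ halfPlane (-(D • e₁)) o ∩ Metric.ball o ε)
      ((convex_halfPlane _ _).inter (hpc _)).isPreconnected ?_ ?_ ?_
      (inter_subset_right.trans inter_subset_right)
      (union_subset inter_subset_right inter_subset_right) ?_
    · obtain ⟨δ, hδ, hsm⟩ := exists_small (-(e₁ + e₂)) hε
      have hpt : o + δ • (-(e₁ + e₂)) = o + (-δ) • e₁ + (-δ) • e₂ := by module
      have hball : o + δ • (-(e₁ + e₂)) ∈ Metric.ball o ε := hsm δ (abs_of_pos hδ).le o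
      refine IsPreconnected.union (o + δ • (-(e₁ + e₂))) ⟨?_, hball⟩ ⟨?_, hball⟩
        (hpc _).isPreconnected (hpc _).isPreconnected
      · simp only [halfPlane, mem_ofPred_eq]
        rw [hpt, ca]; nlinarith
      · simp only [halfPlane, mem_ofPred_eq]
        rw [hpt, cr_neg_left, cb]; nlinarith
    · rintro x ⟨h1, h2, h3⟩ hF
      obtain ⟨a, b, rfl⟩ := cr_exists_coords hcol o x
      simp only [halfPlane, mem_ofPred_eq, cr_neg_left, ca, cb] at h1 h2
      rcases (front a b h3).1 hF with ⟨-, rfl⟩ | ⟨rfl, -⟩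
      · simp at h2
      · simp at h1
    · rintro x hx hF
      obtain ⟨a, b, rfl⟩ := cr_exists_coords hcol o x
      rcases hx with ⟨h1, h3⟩ | ⟨h1, h3⟩
      · simp only [halfPlane, mem_ofPred_eq, ca] at h1
        rcases (front a b h3).1 hF with ⟨h, rfl⟩ | ⟨rfl, -⟩
        · nlinarith
        · simp at h1
      · simp only [halfPlane, mem_ofPred_eq, cr_neg_left, cb] at h1
        rcases (front a b h3).1 hF with ⟨-, rfl⟩ | ⟨-, h⟩
        · simp at h1
        · nlinarith
    · intro x hx
      obtain ⟨a, b, rfl⟩ := cr_exists_coords hcol o x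
      simp only [halfPlane, mem_union, mem_inter_iff, mem_ofPred_eq, cr_neg_left, ca, cb, hx,
        and_true, front a b hx]
      rcases lt_trichotomy a 0 with ha | ha | ha
      · left; right; left; nlinarith
      · rcases lt_or_ge b 0 with hb | hb
        · left; right; right; nlinarith
        · right; right; exact ⟨ha, hb⟩
      · rcases lt_trichotomy b 0 with hb | hb | hb
        · left; right; right; nlinarith
        · right; left; exact ⟨ha.le, hb⟩
        · left; left; constructor <;> nlinarith

theorem isPreconnected_frontier : IsPreconnected (frontier S.P) := by
  rw [S.boundary]
  have : (⋃ i ∈ Finset.range S.n, segment ℝ (S.vtx i) (S.vtx (i + 1))) =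
      ⋃ i ∈ Set.Iio S.n, segment ℝ (S.vtx i) (S.vtx (i + 1)) := by
    ext x; simp
  rw [this]
  refine IsPreconnected.biUnion_of_chain ordConnected_Iio
    (fun i _ => (convex_segment _ _).isPreconnected) (fun i _ _ => ?_)
  exact ⟨S.vtx (i + 1), right_mem_segment ℝ _ _, left_mem_segment ℝ _ _⟩

/-- The exterior of the polygon is connected. If it were the union of two disjoint nonempty open
sets, the closures of both would meet the boundary; as the boundary is connected and covered by
these closures, they have a common boundary point, contradicting local connectedness there. -/
theorem isPreconnected_compl : IsPreconnected S.Pᶜ := by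
  rw [isPreconnected_iff_subset_of_disjoint]
  intro u v hu hv huv hd
  by_contra! hcon
  obtain ⟨hnu, hnv⟩ := hcon
  have hPo : IsOpen S.Pᶜ := S.isClosed_P.isOpen_compl
  have meet : ∀ a b : Set Pt, IsOpen a → IsOpen b → S.Pᶜ ⊆ a ∪ b → S.Pᶜ ∩ (a ∩ b) = ∅ →
      (S.Pᶜ ∩ a).Nonempty → (frontier S.P ∩ closure (S.Pᶜ ∩ a)).Nonempty := by
    intro a b ha hb hab hdis hne
    by_contra hemp
    have hcl : IsClosed (S.Pᶜ ∩ a) := by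
      apply isClosed_of_closure_subset
      intro x hx
      have hxP : x ∉ S.P := fun hxP => hemp ⟨x, S.mem_frontier_of_closure hxP
        (closure_mono inter_subset_left hx), hx⟩
      refine ⟨hxP, ?_⟩
      rcases hab hxP with h | h
      · exact h
      · exfalso
        obtain ⟨z, hz1, hz2⟩ := mem_closure_iff.1 hx b hb h
        have : z ∈ S.Pᶜ ∩ (a ∩ b) := ⟨hz2.1, hz2.2, hz1⟩
        rw [hdis] at this; exact this
    rcases isClopen_iff.1 ⟨hcl, hPo.inter ha⟩ with h | h
    · exact hne.ne_empty h
    · obtain ⟨x, hx⟩ := S.connected'.nonempty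
      have : x ∈ S.Pᶜ ∩ a := by rw [h]; trivial
      exact this.1 hx
  have neu : (S.Pᶜ ∩ u).Nonempty := by
    obtain ⟨x, hx, hxv⟩ := not_subset.1 hnv
    exact ⟨x, hx, (huv hx).resolve_right hxv⟩
  have nev : (S.Pᶜ ∩ v).Nonempty := by
    obtain ⟨x, hx, hxv⟩ := not_subset.1 hnu
    exact ⟨x, hx, (huv hx).resolve_left hxv⟩
  have mu := meet u v hu hv huv hd neu
  have mv := meet v u hv hu (by rwa [union_comm]) (by rwa [inter_comm v u]) nev
  have hcov : frontier S.P ⊆ closure (S.Pᶜ ∩ u) ∪ closure (S.Pᶜ ∩ v) := by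
    rw [← closure_union, ← inter_union_distrib_left, inter_eq_left.2 huv]
    rw [frontier_eq_closure_inter_closure]
    exact inter_subset_right
  obtain ⟨o, hoF, hou, hov⟩ := isPreconnected_closed_iff.1 S.isPreconnected_frontier _ _
    isClosed_closure isClosed_closure hcov mu mv
  obtain ⟨ε, hε, hU⟩ := S.local_exterior hoF
  obtain ⟨x, hx, hxd⟩ := Metric.mem_closure_iff.1 hou ε hε
  obtain ⟨y, hy, hyd⟩ := Metric.mem_closure_iff.1 hov ε hε
  rw [dist_comm] at hxd hyd
  rcases isPreconnected_iff_subset_of_disjoint.1 hU u v hu hv (inter_subset_right.trans huv)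
    (by
      apply Set.eq_empty_of_forall_notMem
      rintro z ⟨⟨-, h1⟩, h2⟩
      have : z ∈ S.Pᶜ ∩ (u ∩ v) := ⟨h1, h2⟩
      rw [hd] at this; exact this) with h | h
  · have : y ∈ S.Pᶜ ∩ (u ∩ v) := ⟨hy.1, h ⟨hyd, hy.1⟩, hy.2⟩
    rw [hd] at this; exact this
  · have : x ∈ S.Pᶜ ∩ (u ∩ v) := ⟨hx.1, hx.2, h ⟨hxd, hx.1⟩⟩
    rw [hd] at this; exact this

end SimplePolygon

/-! ### Winding numbers of closed polygonal paths -/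

/-- A point of the Euclidean plane as a complex number. -/
def toC (p : Pt) : ℂ := ⟨p 0, p 1⟩

theorem toC_sub (p q : Pt) : toC (p - q) = toC p - toC q := by
  apply Complex.ext <;> simp [toC]

theorem toC_add (p q : Pt) : toC (p + q) = toC p + toC q := by
  apply Complex.ext <;> simp [toC]

theorem toC_smul (t : ℝ) (p : Pt) : toC (t • p) = t * toC p := by
  apply Complex.ext <;> simp [toC]

theorem toC_inj {p q : Pt} (h : toC p = toC q) : p = q := by
  have h0 := congrArg Complex.re h
  have h1 := congrArg Complex.im h
  ext i
  fin_cases i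
  · exact h0
  · exact h1

theorem toC_sub_ne {p q : Pt} (h : p ≠ q) : toC p - toC q ≠ 0 :=
  fun H => h (toC_inj (sub_eq_zero.1 H))

theorem norm_toC (p : Pt) : ‖toC p‖ = ‖p‖ := by
  rw [Complex.norm_eq_sqrt_sq_add_sq, EuclideanSpace.norm_eq, Fin.sum_univ_two]
  simp [toC]

theorem continuous_toC : Continuous toC := by
  have : Continuous fun p : Pt => ((p 0 : ℂ) + (p 1 : ℂ) * Complex.I) := by fun_prop
  convert this using 2 with p
  apply Complex.ext <;> simp [toC]

/-- The sign of the imaginary part of a quotient is the orientation of the two vectors. -/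
theorem im_div_toC (p q : Pt) : (toC q / toC p).im = cr p q / Complex.normSq (toC p) := by
  rw [Complex.div_im]
  simp only [toC, cr]
  ring

theorem div_mem_slitPlane {p q y : Pt} (h : y ∉ segment ℝ p q) :
    (toC q - toC y) / (toC p - toC y) ∈ Complex.slitPlane := by
  have hp : p ≠ y := by rintro rfl; exact h (left_mem_segment ℝ _ _)
  have hpn := toC_sub_ne hp
  rw [Complex.mem_slitPlane_iff]
  by_contra! H
  obtain ⟨hre, him⟩ := H
  set z := (toC q - toC y) / (toC p - toC y) with hz
  set c : ℝ := -z.re with hc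
  have hc0 : 0 ≤ c := by rw [hc]; linarith
  have hzc : z = -(c : ℂ) := by
    apply Complex.ext <;> simp [hc, him]
  rw [hz, div_eq_iff hpn] at hzc
  apply h
  rw [mem_segment_iff_add]
  have h1 : (1 + c) ≠ 0 := by linarith
  refine ⟨1 / (1 + c), by positivity, by rw [div_le_one (by positivity)]; linarith, ?_⟩
  apply toC_inj
  rw [toC_add, toC_smul, toC_sub]
  have h2 : (1 + (c : ℂ)) ≠ 0 := by exact_mod_cast h1
  push_cast
  field_simp
  linear_combination -hzc

/-- The total turn about `y` of the polygonal path with the given vertices, as a sum of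
principal logarithms of the quotients of consecutive vertices (seen from `y`). -/
noncomputable def wnd (y : Pt) : List Pt → ℂ
  | a :: b :: l => Complex.log ((toC b - toC y) / (toC a - toC y)) + wnd y (b :: l)
  | _ => 0

/-- The turn is a logarithm of the quotient of the last by the first vertex, seen from `y`; in
particular it is a multiple of `2πi` for closed paths. -/
theorem exp_wnd (y : Pt) : ∀ (l : List Pt) (a : Pt), (∀ p ∈ a :: l, p ≠ y) →
    Complex.exp (wnd y (a :: l)) = (toC (l.getLastD a) - toC y) / (toC a - toC y)
  | [], a, h => by
    have := toC_sub_ne (h a (by simp))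
    simp [wnd, div_self this]
  | b :: l, a, h => by
    have ha := toC_sub_ne (h a (by simp))
    have hb := toC_sub_ne (h b (by simp))
    rw [wnd, Complex.exp_add, Complex.exp_log (div_ne_zero hb ha),
      exp_wnd y l b (fun p hp => h p (List.mem_cons_of_mem _ hp)), List.getLastD_cons]
    field_simp

/-- Consecutive points of the list see each other inside `P`. -/
abbrev Chn (P : Set Pt) (l : List Pt) : Prop := l.IsChain (fun p q => segment ℝ p q ⊆ P)

theorem chn_cons_cons {P : Set Pt} {a b : Pt} {l : List Pt} :
    Chn P (a :: b :: l) ↔ segment ℝ a b ⊆ P ∧ Chn P (b :: l) := List.isChain_cons_cons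

theorem continuousOn_wnd {P : Set Pt} : ∀ l : List Pt, Chn P l →
    ContinuousOn (fun y => wnd y l) Pᶜ
  | [], _ => by simpa [wnd] using continuousOn_const
  | [a], _ => by simpa [wnd] using continuousOn_const
  | a :: b :: l, h => by
    rw [chn_cons_cons] at h
    simp only [wnd]
    refine ContinuousOn.add (ContinuousOn.clog (ContinuousOn.div ?_ ?_ ?_) ?_)
      (continuousOn_wnd (b :: l) h.2)
    · exact (continuous_const.sub continuous_toC).continuousOn
    · exact (continuous_const.sub continuous_toC).continuousOn
    · intro y hy
      exact toC_sub_ne (by rintro rfl; exact hy (h.1 (left_mem_segment ℝ _ _)))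
    · intro y hy
      exact div_mem_slitPlane (fun H => hy (h.1 H))

/-- The turn vanishes at infinity. -/
theorem tendsto_wnd : ∀ l : List Pt,
    Filter.Tendsto (fun y => wnd y l) (Bornology.cobounded Pt) (nhds 0)
  | [] => by simp [wnd]
  | [a] => by simp [wnd]
  | a :: b :: l => by
    simp only [wnd]
    have h1 : Filter.Tendsto (fun y : Pt => toC y - toC a) (Bornology.cobounded Pt)
        (Bornology.cobounded ℂ) := by
      rw [← tendsto_norm_atTop_iff_cobounded]
      have : Filter.Tendsto (fun y : Pt => ‖y - a‖) (Bornology.cobounded Pt) Filter.atTop := by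
        apply Filter.tendsto_atTop_mono (f := fun y : Pt => ‖y‖ - ‖a‖)
        · intro y; exact norm_sub_norm_le y a
        · exact Filter.tendsto_atTop_add_const_right _ _ tendsto_norm_cobounded_atTop
      convert this using 2 with y
      rw [← toC_sub, norm_toC]
    have h2 := (Filter.tendsto_inv₀_cobounded.comp h1)
    have h3 : Filter.Tendsto (fun y : Pt => (toC b - toC y) / (toC a - toC y))
        (Bornology.cobounded Pt) (nhds 1) := by
      have h4 : Filter.Tendsto (fun y : Pt => 1 + (toC a - toC b) * (toC y - toC a)⁻¹)
          (Bornology.cobounded Pt) (nhds (1 + (toC a - toC b) * 0)) :=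
        (h2.const_mul _).const_add _
      rw [mul_zero, add_zero] at h4
      refine h4.congr' ?_
      have : ∀ᶠ y in Bornology.cobounded Pt, y ≠ a := by
        have : Bornology.IsBounded ({a} : Set Pt) := Bornology.isBounded_singleton
        rw [← Bornology.isCobounded_compl_iff] at this
        filter_upwards [this] with y hy using hy
      filter_upwards [this] with y hy
      have e1 := toC_sub_ne hy
      have e2 := toC_sub_ne hy.symm
      field_simp
      ring
    have h5 := h3.clog (by simp)
    rw [Complex.log_one] at h5
    simpa using h5.add (tendsto_wnd (b :: l))

theorem mem_of_chain {P : Set Pt} : ∀ {l : List Pt}, Chn P l → 2 ≤ l.length → ∀ x ∈ l, x ∈ P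
  | [], _, h2, _, _ => by simp at h2
  | [_], _, h2, _, _ => by simp at h2
  | [a, b], h, _, x, hx => by
    rw [chn_cons_cons] at h
    rcases List.mem_cons.1 hx with rfl | hx
    · exact h.1 (left_mem_segment ℝ _ _)
    · rw [List.mem_singleton.1 hx]
      exact h.1 (right_mem_segment ℝ _ _)
  | a :: b :: c :: l, h, _, x, hx => by
    rw [chn_cons_cons] at h
    rcases List.mem_cons.1 hx with rfl | hx
    · exact h.1 (left_mem_segment ℝ _ _)
    · exact mem_of_chain h.2 (by simp) x hx

/-- A closed polygonal path inside `P` does not wind about any exterior point: the total turn is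
an integral multiple of `2π`, it is continuous on the connected set `Pᶜ`, and it vanishes at
infinity. -/
theorem wnd_eq_zero {P : Set Pt} (hb : Bornology.IsBounded P) (hP : IsPreconnected Pᶜ)
    {a : Pt} {l : List Pt} (hl : l ≠ []) (hc : Chn P (a :: l)) (hlast : l.getLastD a = a)
    {y : Pt} (hy : y ∉ P) : wnd y (a :: l) = 0 := by
  have hmem : ∀ x ∈ a :: l, x ∈ P := mem_of_chain hc (by
    rcases l with _ | ⟨b, l⟩
    · exact absurd rfl hl
    · simp)
  have hint : ∀ y ∉ P, ∃ n : ℤ, wnd y (a :: l) = n * (2 * Real.pi * Complex.I) := by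
    intro y hy
    rw [← Complex.exp_eq_one_iff, exp_wnd y l a, hlast, div_self]
    · exact toC_sub_ne (by rintro rfl; exact hy (hmem _ (by simp)))
    · intro p hp; rintro rfl; exact hy (hmem _ hp)
  set f : Pt → ℝ := fun y => (wnd y (a :: l)).im / (2 * Real.pi) with hf
  have hpi := Real.pi_pos
  have hfint : ∀ y ∉ P, ∃ n : ℤ, f y = n ∧ wnd y (a :: l) = n * (2 * Real.pi * Complex.I) := by
    intro y hy
    obtain ⟨n, hn⟩ := hint y hy
    refine ⟨n, ?_, hn⟩
    simp only [hf, hn]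
    simp
  have hfc : ContinuousOn f Pᶜ :=
    (Complex.continuous_im.comp_continuousOn (continuousOn_wnd _ hc)).div_const _
  have hord := (hP.image f hfc).ordConnected
  obtain ⟨y₀, hy₀, hy₀n⟩ : ∃ y₀, y₀ ∉ P ∧ ‖wnd y₀ (a :: l)‖ < 1 := by
    have h1 := (tendsto_wnd (a :: l)).norm
    rw [norm_zero] at h1
    have h2 := h1.eventually (gt_mem_nhds one_pos)
    have h3 : Pᶜ ∈ Bornology.cobounded Pt := Bornology.isCobounded_compl_iff.2 hb
    obtain ⟨y, hy⟩ := (h2.and h3).exists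
    exact ⟨y, hy.2, hy.1⟩
  have hf0 : f y₀ = 0 := by
    obtain ⟨n, hn, -⟩ := hfint y₀ hy₀
    have h1 : |f y₀| < 1 := by
      simp only [hf]
      rw [abs_div, abs_of_pos (by positivity : (0:ℝ) < 2 * Real.pi), div_lt_one (by positivity)]
      have := Complex.abs_im_le_norm (wnd y₀ (a :: l))
      have := Real.two_le_pi
      linarith
    rw [hn] at h1 ⊢
    have h2 : |n| < 1 := by exact_mod_cast h1
    rw [Int.abs_lt_one_iff.1 h2]; simp
  obtain ⟨n, hn, hw⟩ := hfint y hy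
  suffices n = 0 by rw [hw, this]; simp
  have half : ∀ y' ∉ P, f y' ≠ 1 / 2 ∧ f y' ≠ - (1 / 2) := by
    intro y' hy'
    obtain ⟨m, hm, -⟩ := hfint y' hy'
    rw [hm]
    constructor
    · intro h
      have : (2 : ℝ) * m = 1 := by linarith
      have : 2 * m = 1 := by exact_mod_cast this
      omega
    · intro h
      have : (2 : ℝ) * m = -1 := by linarith
      have : 2 * m = -1 := by exact_mod_cast this
      omega
  have m0 : (0 : ℝ) ∈ f '' Pᶜ := ⟨y₀, hy₀, hf0⟩
  have m1 : (n : ℝ) ∈ f '' Pᶜ := ⟨y, hy, hn⟩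
  by_contra hn0
  rcases lt_or_gt_of_ne hn0 with h | h
  · have h' : (n : ℝ) ≤ -1 := by exact_mod_cast (by omega : n ≤ -1)
    obtain ⟨y', hy', e⟩ := hord.out m1 m0 (show -(1 / 2 : ℝ) ∈ Icc (n : ℝ) 0 by
      constructor <;> linarith)
    exact (half y' hy').2 e
  · have h' : (1 : ℝ) ≤ n := by exact_mod_cast (by omega : 1 ≤ n)
    obtain ⟨y', hy', e⟩ := hord.out m0 m1 (show (1 / 2 : ℝ) ∈ Icc 0 (n : ℝ) by
      constructor <;> linarith)
    exact (half y' hy').1 e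

theorem wnd_concat (y e : Pt) : ∀ (l : List Pt) (b : Pt),
    wnd y (b :: (l ++ [e])) =
      wnd y (b :: l) + Complex.log ((toC e - toC y) / (toC (l.getLastD b) - toC y))
  | [], b => by simp [wnd]
  | c :: l, b => by
    rw [List.cons_append, wnd, wnd_concat y e l c, wnd, List.getLastD_cons]
    ring

theorem log_div_of_re_pos {z w : ℂ} (hz : 0 < z.re) (hw : 0 < w.re) :
    Complex.log (w / z) = Complex.log w - Complex.log z := by
  have hz0 : z ≠ 0 := by rintro rfl; simp at hz
  have hw0 : w ≠ 0 := by rintro rfl; simp at hw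
  have az := abs_lt.1 (Complex.abs_arg_lt_pi_div_two_iff.2 (Or.inl hz))
  have aw := abs_lt.1 (Complex.abs_arg_lt_pi_div_two_iff.2 (Or.inl hw))
  rw [← Complex.log_exp (x := Complex.log w - Complex.log z), Complex.exp_sub,
    Complex.exp_log hz0, Complex.exp_log hw0]
  · rw [Complex.sub_im, Complex.log_im, Complex.log_im]; linarith
  · rw [Complex.sub_im, Complex.log_im, Complex.log_im]; linarith

/-- If all vertices lie in an open half plane bounded by a line through `y`, the turns add up. -/
theorem wnd_of_half_plane (y : Pt) (c : ℂ) : ∀ (l : List Pt) (b : Pt),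
    (∀ m ∈ b :: l, 0 < (c * (toC m - toC y)).re) →
    wnd y (b :: l) = Complex.log ((toC (l.getLastD b) - toC y) / (toC b - toC y)) := by
  intro l b h
  have hc : c ≠ 0 := by
    rintro rfl; simpa using h b (by simp)
  have key : ∀ p q : Pt, 0 < (c * (toC p - toC y)).re → 0 < (c * (toC q - toC y)).re →
      Complex.log ((toC q - toC y) / (toC p - toC y)) =
        Complex.log (c * (toC q - toC y)) - Complex.log (c * (toC p - toC y)) := by
    intro p q hp hq
    rw [← log_div_of_re_pos hp hq, mul_div_mul_left _ _ hc]
  induction l generalizing b with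
  | nil =>
    rw [List.getLastD_nil, div_self, Complex.log_one, wnd]
    · simp
    · intro H
      have := h b (by simp)
      rw [H] at this; simp at this
  | cons d l ih =>
    have hl : ∀ m ∈ d :: l, 0 < (c * (toC m - toC y)).re :=
      fun m hm => h m (List.mem_cons_of_mem _ hm)
    have hlast : l.getLastD d ∈ d :: l := by
      rcases l.eq_nil_or_concat with rfl | ⟨L, x, rfl⟩ <;> simp
    rw [wnd, ih d hl, List.getLastD_cons, key b d (h b (by simp)) (h d (by simp)),
      key d _ (h d (by simp)) (hl _ hlast), key b _ (h b (by simp)) (hl _ hlast)]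
    ring

/-- Linear functionals of the plane are the real parts of complex multiplications. -/
theorem dual_eq_re (f : Pt →L[ℝ] ℝ) : ∃ c : ℂ, ∀ p, f p = (c * toC p).re := by
  refine ⟨⟨f (EuclideanSpace.single 0 1), - f (EuclideanSpace.single 1 1)⟩, fun p => ?_⟩
  have : p = p 0 • EuclideanSpace.single 0 1 + p 1 • EuclideanSpace.single 1 1 := by
    ext i; fin_cases i <;> simp
  conv_lhs => rw [this]
  rw [map_add, map_smul, map_smul, Complex.mul_re]
  simp [toC]
  ring

/-- A closed polygonal path in `P` has no exterior points in the corner at a vertex `e` that is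
strictly separated from the other vertices: the path would wind about them. -/
theorem tip {P : Set Pt} (hb : Bornology.IsBounded P) (hP : IsPreconnected Pᶜ)
    {e b : Pt} {M : List Pt} (hc : Chn P (e :: b :: (M ++ [e])))
    (hconv : e ∉ convexHull ℝ {x | x ∈ b :: M})
    (hcr : cr (M.getLastD b - e) (b - e) ≠ 0) :
    ∃ ε > 0, ∀ y, dist y e < ε → ∀ α β : ℝ, 0 < α → 0 < β →
      y = e + α • (M.getLastD b - e) + β • (b - e) → y ∈ P := by
  obtain ⟨f, r, hfe, hfM⟩ := geometric_hahn_banach_point_closed (convex_convexHull ℝ _)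
    (((b :: M).finite_toSet).isClosed_convexHull ℝ) hconv
  obtain ⟨c, hfc⟩ := dual_eq_re f
  set a := M.getLastD b with ha
  set K := cr (a - e) (b - e) with hK
  have ev1 : ∀ᶠ y in nhds e, f y < r := f.continuous.continuousAt.eventually (gt_mem_nhds hfe)
  have ev2 : ∀ᶠ y in nhds e, cr (b - a) (y - e) / (-K) < 1 := by
    have hcont : Continuous fun y => cr (b - a) (y - e) / (-K) :=
      (continuous_cr _ _).div_const _
    refine hcont.continuousAt.eventually (gt_mem_nhds ?_)
    simp [cr]
  obtain ⟨ε, hε, hball⟩ := Metric.eventually_nhds_iff.1 (ev1.and ev2)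
  refine ⟨ε, hε, fun y hy α β hα hβ hyE => ?_⟩
  by_contra hyP
  obtain ⟨y1, y2⟩ := hball hy
  have hs : α + β < 1 := by
    have : cr (b - a) (y - e) / (-K) = α + β := by
      rw [div_eq_iff (neg_ne_zero.2 hcr), hyE, hK]
      simp [cr]; ring
    linarith
  have hzero := wnd_eq_zero hb hP (a := e) (l := b :: (M ++ [e])) (by simp) hc
    (by rw [List.getLastD_cons, List.getLastD_concat]) hyP
  have hhalf : ∀ m ∈ b :: M, 0 < (c * (toC m - toC y)).re := by
    intro m hm
    rw [mul_sub, Complex.sub_re, ← hfc, ← hfc]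
    have := hfM m (subset_convexHull ℝ _ hm)
    linarith
  rw [wnd, wnd_concat, wnd_of_half_plane y c M b hhalf, ← ha] at hzero
  have him := congrArg Complex.im hzero
  simp only [Complex.add_im, Complex.log_im, Complex.zero_im] at him
  have hpos : ∀ p : Pt, p ∈ P → 0 < Complex.normSq (toC (p - y)) := by
    intro p hp
    rw [Complex.normSq_pos, toC_sub]
    exact toC_sub_ne (by rintro rfl; exact hyP hp)
  have hmem := mem_of_chain hc (by simp)
  have pe := hpos e (hmem e (by simp))
  have pb := hpos b (hmem b (by simp))
  have pa := hpos a (hmem a (by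
    rcases M.eq_nil_or_concat with h | ⟨L, x, h⟩ <;> simp [ha, h]))
  have s1 : cr (e - y) (b - y) = -(α * K) := by
    rw [hyE, hK]; simp [cr]; ring
  have s2 : cr (b - y) (a - y) = -((1 - α - β) * K) := by
    rw [hyE, hK]; simp [cr]; ring
  have s3 : cr (a - y) (e - y) = -(β * K) := by
    rw [hyE, hK]; simp [cr]; ring
  have h1 := im_div_toC (e - y) (b - y)
  have h2 := im_div_toC (b - y) (a - y)
  have h3 := im_div_toC (a - y) (e - y)
  rw [s1] at h1; rw [s2] at h2; rw [s3] at h3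
  simp only [toC_sub] at h1 h2 h3 pe pb pa
  have hαβ : 0 < 1 - α - β := by linarith
  rcases lt_or_gt_of_ne hcr with hk | hk
  · -- all three turns are positive
    have q1 : 0 < ((toC b - toC y) / (toC e - toC y)).im := by
      rw [h1]; exact div_pos (by nlinarith) pe
    have q2 : 0 < ((toC a - toC y) / (toC b - toC y)).im := by
      rw [h2]; exact div_pos (by nlinarith) pb
    have q3 : 0 < ((toC e - toC y) / (toC a - toC y)).im := by
      rw [h3]; exact div_pos (by nlinarith) pa
    have r1 := Complex.arg_nonneg_iff.2 q1.le
    have r2 := Complex.arg_nonneg_iff.2 q2.le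
    have r3 := Complex.arg_nonneg_iff.2 q3.le
    have r1' : Complex.arg ((toC b - toC y) / (toC e - toC y)) = 0 := by linarith
    rw [Complex.arg_eq_zero_iff] at r1'
    linarith [r1'.2]
  · -- all three turns are negative
    have q1 : ((toC b - toC y) / (toC e - toC y)).im < 0 := by
      rw [h1]; exact div_neg_of_neg_of_pos (by nlinarith) pe
    have q2 : ((toC a - toC y) / (toC b - toC y)).im < 0 := by
      rw [h2]; exact div_neg_of_neg_of_pos (by nlinarith) pb
    have q3 : ((toC e - toC y) / (toC a - toC y)).im < 0 := by
      rw [h3]; exact div_neg_of_neg_of_pos (by nlinarith) pa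
    have r1 := Complex.arg_neg_iff.2 q1
    have r2 := Complex.arg_neg_iff.2 q2
    have r3 := Complex.arg_neg_iff.2 q3
    linarith

/-! ### Geodesic polygonal paths -/

theorem chn_split {P : Set Pt} {a : Pt} {X Y : List Pt} :
    Chn P (X ++ a :: Y) ↔ Chn P (X ++ [a]) ∧ Chn P (a :: Y) := List.isChain_split

theorem pathLen_nonneg : ∀ l : List Pt, 0 ≤ pathLen l
  | [] => le_rfl
  | [_] => le_rfl
  | _ :: b :: l => add_nonneg dist_nonneg (pathLen_nonneg (b :: l))

theorem pathLen_split : ∀ (X : List Pt) (a : Pt) (Y : List Pt),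
    pathLen (X ++ a :: Y) = pathLen (X ++ [a]) + pathLen (a :: Y)
  | [], _, _ => by simp [pathLen]
  | [_], _, _ => by simp [pathLen]
  | b :: c :: X, a, Y => by
    have := pathLen_split (c :: X) a Y
    simp only [List.cons_append, pathLen] at this ⊢
    rw [this]; ring

theorem dist_le_pathLen : ∀ (l : List Pt) (a b : Pt), dist a b ≤ pathLen (a :: (l ++ [b]))
  | [], a, b => by simp [pathLen]
  | c :: l, a, b => by
    have := dist_le_pathLen l c b
    have := dist_triangle a c b
    simp only [List.cons_append, pathLen]
    linarith

theorem IsPathIn.exists_cons {P : Set Pt} {a b : Pt} {l : List Pt} (h : IsPathIn P a b l) :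
    ∃ l', l = a :: l' := by
  obtain ⟨h0, h1, -, -⟩ := h
  cases l with
  | nil => exact absurd rfl h0
  | cons x l => simp at h1; exact ⟨l, by rw [h1]⟩

theorem IsPathIn.exists_concat {P : Set Pt} {a b : Pt} {l : List Pt} (h : IsPathIn P a b l) :
    ∃ l', l = l' ++ [b] := by
  obtain ⟨h0, -, h1, -⟩ := h
  rcases l.eq_nil_or_concat with rfl | ⟨L, x, rfl⟩
  · exact absurd rfl h0
  · simp at h1; exact ⟨L, by rw [List.concat_eq_append, h1]⟩

theorem IsPathIn.chn {P : Set Pt} {a b : Pt} {l : List Pt} (h : IsPathIn P a b l) : Chn P l :=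
  h.2.2.2

theorem IsPathIn.mk' {P : Set Pt} {a b : Pt} {l : List Pt} (h1 : l.head? = some a)
    (h2 : l.getLast? = some b) (h3 : Chn P l) : IsPathIn P a b l :=
  ⟨by rintro rfl; simp at h1, h1, h2, h3⟩

theorem IsPathIn.left {P : Set Pt} {a b c : Pt} {X Y : List Pt}
    (h : IsPathIn P a b (X ++ c :: Y)) : IsPathIn P a c (X ++ [c]) := by
  refine .mk' ?_ (by simp) (chn_split.1 h.chn).1
  have := h.2.1
  cases X <;> simpa using this

theorem IsPathIn.right {P : Set Pt} {a b c : Pt} {X Y : List Pt}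
    (h : IsPathIn P a b (X ++ c :: Y)) : IsPathIn P c b (c :: Y) := by
  refine .mk' (by simp) ?_ (chn_split.1 h.chn).2
  have := h.2.2.1
  simpa [List.getLast?_append] using this

theorem IsPathIn.trans {P : Set Pt} {a b c : Pt} {X Y : List Pt}
    (h : IsPathIn P a c (X ++ [c])) (h' : IsPathIn P c b (c :: Y)) :
    IsPathIn P a b (X ++ c :: Y) := by
  refine .mk' ?_ ?_ (chn_split.2 ⟨h.chn, h'.chn⟩)
  · have := h.2.1
    cases X <;> simpa using this
  · have := h'.2.2.1
    simpa [List.getLast?_append] using this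

theorem IsGeodesic.left {P : Set Pt} {a b c : Pt} {X Y : List Pt}
    (h : IsGeodesic P a b (X ++ c :: Y)) : IsGeodesic P a c (X ++ [c]) := by
  refine ⟨h.1.left, fun l' hl' => ?_⟩
  obtain ⟨l, rfl⟩ := hl'.exists_concat
  have := h.2 _ (hl'.trans h.1.right)
  rw [pathLen_split X, pathLen_split l] at this
  linarith

theorem IsGeodesic.right {P : Set Pt} {a b c : Pt} {X Y : List Pt}
    (h : IsGeodesic P a b (X ++ c :: Y)) : IsGeodesic P c b (c :: Y) := by
  refine ⟨h.1.right, fun l' hl' => ?_⟩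
  obtain ⟨l, rfl⟩ := hl'.exists_cons
  have := h.2 _ (h.1.left.trans hl')
  rw [pathLen_split X, pathLen_split X c l] at this
  linarith

theorem IsGeodesic.eq_len {P : Set Pt} {a b : Pt} {l l' : List Pt} (h : IsGeodesic P a b l)
    (h' : IsGeodesic P a b l') : pathLen l = pathLen l' :=
  le_antisymm (h.2 _ h'.1) (h'.2 _ h.1)

/-- Two consecutive edges of a geodesic are at most as long as any detour. -/
theorem IsGeodesic.two_le {P : Set Pt} {s t p e q : Pt} {X Y M : List Pt}
    (h : IsGeodesic P s t (X ++ p :: e :: q :: Y)) (hM : Chn P (p :: (M ++ [q]))) :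
    dist p e + dist e q ≤ pathLen (p :: (M ++ [q])) := by
  have h1 : IsGeodesic P p q ([p, e] ++ [q]) :=
    IsGeodesic.left (b := t) (X := [p, e]) (Y := Y) h.right
  have h2 := h1.2 (p :: (M ++ [q])) (IsPathIn.mk' (by simp) (by simp [List.getLast?_cons]) hM)
  simpa [pathLen] using h2

theorem IsGeodesic.not_visible {P : Set Pt} {s t p e q : Pt} {X Y : List Pt}
    (h : IsGeodesic P s t (X ++ p :: e :: q :: Y)) (he : e ∉ segment ℝ p q) :
    ¬ segment ℝ p q ⊆ P := by
  intro hs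
  have := h.two_le (M := []) (by simpa using hs)
  apply he
  rw [mem_segment_iff_wbtw, ← dist_add_dist_eq_iff]
  refine le_antisymm ?_ (dist_triangle _ _ _)
  simpa [pathLen] using this

theorem IsGeodesic.seg {P : Set Pt} {s t p e : Pt} {X Y : List Pt}
    (h : IsGeodesic P s t (X ++ p :: e :: Y)) : segment ℝ p e ⊆ P :=
  (chn_cons_cons.1 (chn_split.1 h.1.chn).2).1

theorem IsGeodesic.cr_ne_zero {P : Set Pt} {s t p e q : Pt} {X Y : List Pt}
    (h : IsGeodesic P s t (X ++ p :: e :: q :: Y)) (he : e ∉ segment ℝ p q) :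
    cr (p - e) (q - e) ≠ 0 := by
  intro h0
  refine h.not_visible he ((segment_subset_of_collinear h0).trans (union_subset h.seg ?_))
  exact IsGeodesic.seg (X := X ++ [p]) (Y := Y) (s := s) (t := t) (by simpa using h)

/-- The open angle `∠ p e q` contains exterior points arbitrarily close to its apex `e`. -/
def ExtIn (P : Set Pt) (p e q : Pt) : Prop :=
  ∀ ε > 0, ∃ y, y ∉ P ∧ dist y e < ε ∧ ∃ α β : ℝ, 0 < α ∧ 0 < β ∧
    y = e + α • (p - e) + β • (q - e)

theorem ExtIn.symm {P : Set Pt} {p e q : Pt} (h : ExtIn P p e q) : ExtIn P q e p := by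
  intro ε hε
  obtain ⟨y, hy, hd, α, β, hα, hβ, e⟩ := h ε hε
  exact ⟨y, hy, hd, β, α, hβ, hα, by rw [e, add_right_comm]⟩

/-- A geodesic is taut: at a proper turn, the inner angle contains exterior points near the
turning point, since otherwise the corner could be cut. -/
theorem IsGeodesic.extIn {P : Set Pt} {s t p e q : Pt} {X Y : List Pt}
    (h : IsGeodesic P s t (X ++ p :: e :: q :: Y)) (hcr : cr (p - e) (q - e) ≠ 0) :
    ExtIn P p e q := by
  intro ε hε
  obtain ⟨δ₁, hδ₁, H1⟩ := exists_small (p - e) hε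
  obtain ⟨δ₂, hδ₂, H2⟩ := exists_small (q - e) hε
  set τ := min 1 (min δ₁ δ₂) with hτ
  have τ0 : 0 < τ := lt_min one_pos (lt_min hδ₁ hδ₂)
  have τ1 : τ ≤ 1 := min_le_left _ _
  set p' := e + τ • (p - e) with hp'
  set q' := e + τ • (q - e) with hq'
  have dp : dist p' e < ε := H1 τ (by
    rw [abs_of_pos τ0]; exact (min_le_right _ _).trans (min_le_left _ _)) e
  have dq : dist q' e < ε := H2 τ (by
    rw [abs_of_pos τ0]; exact (min_le_right _ _).trans (min_le_right _ _)) e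
  have s1 := h.seg
  have s2 : segment ℝ e q ⊆ P :=
    IsGeodesic.seg (X := X ++ [p]) (Y := Y) (s := s) (t := t) (by simpa using h)
  have mp' : p' ∈ segment ℝ e p := mem_segment_iff_add.2 ⟨τ, τ0.le, τ1, rfl⟩
  have mq' : q' ∈ segment ℝ e q := mem_segment_iff_add.2 ⟨τ, τ0.le, τ1, rfl⟩
  have s1' : segment ℝ p p' ⊆ P := by
    refine Subset.trans ?_ s1
    rw [segment_symm] at mp'
    exact (convex_segment p e).segment_subset (left_mem_segment ℝ _ _) mp'
  have s2' : segment ℝ q' q ⊆ P := by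
    refine Subset.trans ?_ s2
    exact (convex_segment e q).segment_subset mq' (right_mem_segment ℝ _ _)
  have hne : ¬ segment ℝ p' q' ⊆ P := by
    intro hs
    have h1 := h.two_le (M := [p', q']) (by
      simp only [List.cons_append, List.nil_append, chn_cons_cons]
      exact ⟨s1', hs, s2', List.isChain_singleton _⟩)
    simp only [List.cons_append, List.nil_append, pathLen] at h1
    have e1 : dist p p' = (1 - τ) * dist p e := by
      rw [dist_eq_norm, dist_eq_norm, show p - p' = (1 - τ) • (p - e) by rw [hp']; module,
        norm_smul, Real.norm_eq_abs, abs_of_nonneg (by linarith)]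
    have e2 : dist p' q' = τ * dist p q := by
      rw [dist_eq_norm, dist_eq_norm, show p' - q' = τ • (p - q) by rw [hp', hq']; module,
        norm_smul, Real.norm_eq_abs, abs_of_pos τ0]
    have e3 : dist q' q = (1 - τ) * dist e q := by
      rw [dist_eq_norm, dist_eq_norm, show q' - q = (1 - τ) • (e - q) by rw [hq']; module,
        norm_smul, Real.norm_eq_abs, abs_of_nonneg (by linarith)]
    rw [e1, e2, e3] at h1
    have h2 : dist p e + dist e q ≤ dist p q := by
      have : τ * (dist p e + dist e q) ≤ τ * dist p q := by linarith
      exact le_of_mul_le_mul_left this τ0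
    have h3 := le_antisymm h2 (dist_triangle _ _ _)
    rw [dist_add_dist_eq_iff, ← mem_segment_iff_wbtw] at h3
    obtain ⟨c, -, -, hc⟩ := mem_segment_iff_add.1 h3
    apply hcr
    rw [hc]; simp [cr]; ring
  obtain ⟨y, hy, hyP⟩ := not_subset.1 hne
  refine ⟨y, hyP, ?_, ?_⟩
  · exact (convex_ball e ε).segment_subset dp dq hy
  · obtain ⟨c, c0, c1, hc⟩ := mem_segment_iff_add.1 hy
    have hc0 : c ≠ 0 := by
      rintro rfl
      apply hyP
      rw [hc, zero_smul, add_zero]; rw [segment_symm] at s1; exact s1 mp'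
    have hc1 : c ≠ 1 := by
      rintro rfl
      apply hyP
      rw [hc, one_smul, add_sub_cancel]; exact s2 mq'
    have c0' : 0 < c := lt_of_le_of_ne c0 (Ne.symm hc0)
    have c1' : 0 < 1 - c := sub_pos.2 (lt_of_le_of_ne c1 hc1)
    refine ⟨(1 - c) * τ, c * τ, by positivity, by positivity, ?_⟩
    rw [hc, hp', hq']; module

theorem IsPathIn.exists_nodup {P : Set Pt} {a b : Pt} : ∀ {l : List Pt}, IsPathIn P a b l →
    ∃ l', IsPathIn P a b l' ∧ l'.Nodup ∧ pathLen l' ≤ pathLen l := by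
  intro l
  induction l generalizing a with
  | nil => intro h; exact absurd rfl h.1
  | cons x l ih =>
    intro h
    obtain rfl : x = a := by have := h.2.1; simpa using this
    cases l with
    | nil => exact ⟨[x], h, by simp, le_rfl⟩
    | cons c l =>
      have hc : IsPathIn P c b (c :: l) := IsPathIn.right (X := [x]) h
      obtain ⟨m, hm, hnd, hlen⟩ := ih hc
      by_cases hx : x ∈ m
      · obtain ⟨A, B, rfl⟩ := List.append_of_mem hx
        refine ⟨x :: B, hm.right, hnd.sublist (List.sublist_append_right _ _), ?_⟩
        rw [pathLen_split] at hlen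
        have := pathLen_nonneg (A ++ [x])
        have := dist_nonneg (x := x) (y := c)
        rw [pathLen]
        linarith
      · obtain ⟨m', rfl⟩ := hm.exists_cons
        refine ⟨x :: c :: m', IsPathIn.trans (X := [x]) ?_ hm, List.nodup_cons.2 ⟨hx, hnd⟩, ?_⟩
        · exact IsPathIn.left (X := [x]) h
        · rw [pathLen, pathLen]; linarith

theorem IsGeodesic.exists_nodup {P : Set Pt} {a b : Pt} {l : List Pt} (h : IsGeodesic P a b l) :
    ∃ l', IsGeodesic P a b l' ∧ l'.Nodup := by
  obtain ⟨l', h1, h2, h3⟩ := h.1.exists_nodup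
  exact ⟨l', ⟨h1, fun m hm => h3.trans (h.2 m hm)⟩, h2⟩

/-- If the last edge of a geodesic is `aw`, then its part up to `a` may be replaced by any
geodesic. -/
theorem IsGeodesic.swap {P : Set Pt} {s a w : Pt} {l m : List Pt}
    (h : IsGeodesic P s w (l ++ [a, w])) (hm : IsGeodesic P s a (m ++ [a])) :
    IsGeodesic P s w (m ++ [a, w]) := by
  refine ⟨hm.1.trans h.1.right, fun k hk => ?_⟩
  have h1 := h.2 k hk
  have h2 := hm.eq_len h.left
  rw [pathLen_split] at h1 ⊢
  linarith

/-- A geodesic ending at `a` which passes through `w`, where `a` is the last point before `w`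
on another geodesic, cannot exist unless `a = w`. -/
theorem IsGeodesic.not_mem {P : Set Pt} {s a w : Pt} {l m : List Pt}
    (h : IsGeodesic P s w (l ++ [a, w])) (hm : IsGeodesic P s a m) (haw : a ≠ w) : w ∉ m := by
  intro hw
  obtain ⟨A, B, rfl⟩ := List.append_of_mem hw
  have h1 := hm.eq_len h.left
  have h2 := hm.left.eq_len h
  rw [pathLen_split] at h1
  rw [pathLen_split l a [w]] at h2
  have h3 := pathLen_nonneg (w :: B)
  have h4 := dist_pos.2 haw
  simp only [pathLen] at h2
  linarith

theorem IsGeodesic.exists_nodup_concat {P : Set Pt} {s a w : Pt} {l : List Pt}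
    (h : IsGeodesic P s w (l ++ [a, w])) (haw : a ≠ w) :
    ∃ m, IsGeodesic P s w (m ++ [a, w]) ∧ (m ++ [a, w]).Nodup := by
  obtain ⟨m, hm, hnd⟩ := h.left.exists_nodup
  have hw := h.not_mem hm haw
  obtain ⟨m, rfl⟩ := hm.1.exists_concat
  refine ⟨m, h.swap hm, ?_⟩
  have : m ++ [a, w] = (m ++ [a]) ++ [w] := by simp
  rw [this, List.nodup_append]
  refine ⟨hnd, by simp, ?_⟩
  intro x hx y hy
  rw [List.mem_singleton] at hy
  rintro rfl
  exact hw (hy ▸ hx)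

/-! ### Two geodesics and an edge between their endpoints -/

theorem Chn.reverse {P : Set Pt} {l : List Pt} (h : Chn P l) : Chn P l.reverse := by
  rw [Chn, List.isChain_reverse]
  simpa only [segment_symm] using h

theorem exists_last {α : Type*} {p : α → Prop} : ∀ {l : List α}, (∃ x ∈ l, p x) →
    ∃ A x B, l = A ++ x :: B ∧ p x ∧ ∀ y ∈ B, ¬ p y
  | [], h => by simp at h
  | x :: l, h => by
    by_cases hl : ∃ y ∈ l, p y
    · obtain ⟨A, y, B, rfl, hy, hB⟩ := exists_last hl
      exact ⟨x :: A, y, B, by simp, hy, hB⟩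
    · push Not at hl
      obtain ⟨y, hy, hpy⟩ := h
      rcases List.mem_cons.1 hy with rfl | hy
      · exact ⟨[], y, l, by simp, hpy, hl⟩
      · exact absurd hpy (hl y hy)

/-- `tip` for a closed path whose other vertices form the list `T`. -/
theorem tip_false {P : Set Pt} (hb : Bornology.IsBounded P) (hP : IsPreconnected Pᶜ)
    {e a b : Pt} {T : List Pt} (hh : T.head? = some b) (hl : T.getLast? = some a)
    (hc : Chn P (e :: (T ++ [e]))) (hconv : e ∉ convexHull ℝ {x | x ∈ T})
    (hcr : cr (a - e) (b - e) ≠ 0) (hext : ExtIn P a e b) : False := by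
  cases T with
  | nil => simp at hh
  | cons c M =>
    obtain rfl : c = b := by simpa using hh
    obtain rfl : M.getLastD c = a := by
      rcases M.eq_nil_or_concat with rfl | ⟨L, x, rfl⟩
      · simpa using hl
      · simpa [List.getLast?_cons] using hl
    obtain ⟨ε, hε, H⟩ := tip hb hP hc hconv hcr
    obtain ⟨y, hy, hd, α, β, hα, hβ, he⟩ := hext ε hε
    exact hy (H y hd α β hα hβ he)

/-- A closed list of points, not all on the segment between two of them, has an extreme
point different from these two. -/
theorem exists_extreme {L : List Pt} {c d : Pt}
    (hL : ¬ ∀ x ∈ L, x ∈ segment ℝ c d) :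
    ∃ e ∈ L, e ≠ c ∧ e ≠ d ∧ e ∉ convexHull ℝ {x | x ∈ L ∧ x ≠ e} := by
  by_contra! hcon
  apply hL
  set K := convexHull ℝ {x | x ∈ L} with hK
  have hext : extremePoints ℝ K ⊆ {c, d} := by
    intro e he
    have heL : e ∈ {x | x ∈ L} := extremePoints_convexHull_subset he
    by_contra hne
    simp only [mem_insert_iff, mem_singleton_iff, not_or] at hne
    have h1 := hcon e heL hne.1 hne.2
    have h2 := ((convex_convexHull ℝ _).mem_extremePoints_iff_mem_sdiff_convexHull_sdiff.1 he).2
    apply h2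
    refine convexHull_mono ?_ h1
    rintro x ⟨hx, hxe⟩
    exact ⟨subset_convexHull ℝ _ hx, hxe⟩
  have hcl : closure (convexHull ℝ (extremePoints ℝ K)) = K := closure_convexHull_extremePoints
    ((L.finite_toSet).isCompact_convexHull ℝ) (convex_convexHull ℝ _)
  intro x hx
  have hxK : x ∈ K := subset_convexHull ℝ _ hx
  rw [← hcl] at hxK
  refine closure_minimal ?_ (isClosed_segment c d) hxK
  rw [← convexHull_pair]
  exact convexHull_mono hext

/-- Let the geodesics from `s` to `w` and `r` be given, where `w` and `r` see each other, and
let `a` be the last vertex before `w`. If the angle `∠ a w r` contains exterior points near `w`,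
then the geodesic to `r` passes through `w`. Otherwise the two geodesics, followed from their
last common vertex, form with `wr` a simple closed path; at one of its convex corners tautness
provides exterior points around which this path winds. -/
theorem core {P : Set Pt} (hb : Bornology.IsBounded P) (hP : IsPreconnected Pᶜ)
    {s w r a : Pt} {l₀ γ : List Pt} (h₀ : IsGeodesic P s w (l₀ ++ [a, w]))
    (nd₀ : (l₀ ++ [a, w]).Nodup) (h : IsGeodesic P s r γ) (nd : γ.Nodup)
    (hwr : segment ℝ w r ⊆ P) (hcr : cr (a - w) (r - w) ≠ 0) (hext : ExtIn P a w r) :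
    w ∈ γ := by
  by_contra hw
  obtain ⟨A, c, B, rfl, hc, hB⟩ := exists_last (l := γ) (p := fun x => x ∈ l₀ ++ [a, w]) (by
    obtain ⟨l, rfl⟩ := h.1.exists_cons
    obtain ⟨l', hl'⟩ := h₀.1.exists_cons
    exact ⟨s, by simp, by rw [hl']; simp⟩)
  obtain ⟨A₀, B₀, hAB⟩ := List.append_of_mem hc
  have hcw : c ≠ w := by rintro rfl; exact hw (by simp)
  -- the first geodesic is `A₀ ++ c :: Y ++ [w]` with `c :: Y = Z ++ [a]`
  obtain ⟨Y, rfl⟩ : ∃ Y, B₀ = Y ++ [w] := by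
    rcases B₀.eq_nil_or_concat with rfl | ⟨Y, x, rfl⟩
    · exfalso
      have := congrArg List.getLast? hAB
      simp at this
      exact hcw this.symm
    · have := congrArg List.getLast? hAB
      simp [List.getLast?_cons] at this
      exact ⟨Y, by simp [this]⟩
  obtain ⟨Z, hZ⟩ : ∃ Z, c :: Y = Z ++ [a] := by
    rcases (c :: Y).eq_nil_or_concat with h' | ⟨Z, x, hZ⟩
    · simp at h'
    · refine ⟨Z, ?_⟩
      rw [List.concat_eq_append] at hZ
      have e1 : l₀ ++ [a] = A₀ ++ (Z ++ [x]) := by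
        have : (l₀ ++ [a]) ++ [w] = (A₀ ++ (Z ++ [x])) ++ [w] := by
          rw [← hZ]; simpa using hAB
        exact List.append_cancel_right this
      have := congrArg List.getLast? e1
      simp at this
      rw [hZ, this]
  have hr : (c :: B).getLast? = some r := by
    have := h.1.2.2.1
    simpa [List.getLast?_append] using this
  rw [hAB] at h₀ nd₀ hB
  have cB₀ : Chn P (c :: (Y ++ [w])) := (chn_split.1 h₀.1.chn).2
  have cB : Chn P (c :: B) := (chn_split.1 h.1.chn).2
  have cBr : Chn P (B.reverse ++ [c]) := by simpa using cB.reverse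
  have hhead : (B.reverse ++ [c]).head? = some r := by
    have : (B.reverse ++ [c]) = (c :: B).reverse := by simp
    rw [this, List.head?_reverse, hr]
  -- the closed path
  have hloop : Chn P (c :: Y ++ w :: (B.reverse ++ [c])) := by
    rw [chn_split]
    refine ⟨by simpa using cB₀, ?_⟩
    obtain ⟨k, hk⟩ : ∃ k, B.reverse ++ [c] = r :: k := by
      cases hk : B.reverse ++ [c] with
      | nil => simp at hk
      | cons x k => rw [hk] at hhead; simp at hhead; exact ⟨k, by rw [hhead]⟩
    rw [hk] at cBr ⊢
    exact chn_cons_cons.2 ⟨hwr, cBr⟩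
  have ndB₀ : (c :: (Y ++ [w])).Nodup := nd₀.sublist (List.sublist_append_right _ _)
  have ndB : (c :: B).Nodup := nd.sublist (List.sublist_append_right _ _)
  have hdis : ∀ x ∈ B, x ∉ c :: (Y ++ [w]) := fun x hx hx' =>
    hB x hx (List.mem_append_right _ hx')
  have haL : a ∈ c :: Y := by rw [hZ]; simp
  obtain ⟨e, heL, hec, her, heC⟩ := exists_extreme (L := c :: (Y ++ [w]) ++ B) (c := c) (d := r) (by
    intro H
    have ha := H a (by
      have : a ∈ c :: (Y ++ [w]) := by
        rw [← List.cons_append]; exact List.mem_append_left _ haL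
      exact List.mem_append_left _ this)
    have hw := H w (by simp)
    have hr' := right_mem_segment ℝ c r
    apply hcr
    obtain ⟨t, -, -, rfl⟩ := mem_segment_iff_add.1 ha
    obtain ⟨t', -, -, rfl⟩ := mem_segment_iff_add.1 hw
    simp [cr]; ring)
  have hrot : ∀ T : List Pt, (∀ x ∈ T, x ∈ c :: (Y ++ [w]) ++ B) → e ∉ T →
      e ∉ convexHull ℝ {x | x ∈ T} := by
    intro T hT he H
    have hsub : {x | x ∈ T} ⊆ {x | x ∈ c :: (Y ++ [w]) ++ B ∧ x ≠ e} :=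
      fun x hx => ⟨hT x hx, by rintro rfl; exact he hx⟩
    exact heC (convexHull_mono hsub H)
  have segT : ∀ {T : List Pt} {p q : Pt}, e ∉ convexHull ℝ {x | x ∈ T} → T.head? = some p →
      T.getLast? = some q → e ∉ segment ℝ p q := by
    intro T p q hT hp hq H
    apply hT
    exact (convex_convexHull ℝ _).segment_subset
      (subset_convexHull ℝ {x | x ∈ T} (List.mem_of_mem_head? hp))
      (subset_convexHull ℝ {x | x ∈ T} (List.mem_of_mem_getLast? hq)) H
  by_cases hew : e = w
  · subst hew
    have hT := hrot (B.reverse ++ c :: Y) (by intro x hx; simp at hx ⊢; tauto) (by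
      intro H
      rcases List.mem_append.1 H with H | H
      · exact hdis e (List.mem_reverse.1 H) (by simp)
      · have : (c :: Y ++ [e]).Nodup := ndB₀
        rw [List.nodup_append] at this
        exact this.2.2 e H e (by simp) rfl)
    refine tip_false hb hP (T := B.reverse ++ c :: Y) ?_ ?_ ?_ hT hcr hext
    · rw [← hhead]; cases B.reverse <;> simp
    · rw [hZ]; simp
    · have := (chn_split.1 hloop).2
      have h2 : e :: (B.reverse ++ c :: Y ++ [e]) = (e :: B.reverse) ++ c :: (Y ++ [e]) := by simp
      rw [h2, chn_split]
      exact ⟨by simpa using this, cB₀⟩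
  rcases List.mem_append.1 heL with he | he
  · -- `e` lies on the first geodesic
    have he : e ∈ Y := by
      simp only [List.mem_cons, List.mem_append, List.not_mem_nil, or_false] at he
      tauto
    obtain ⟨Y₁, Y₂, rfl⟩ := List.append_of_mem he
    obtain ⟨W, p, hW⟩ : ∃ W p, c :: Y₁ = W ++ [p] := by
      rcases (c :: Y₁).eq_nil_or_concat with h' | ⟨W, p, h'⟩
      · simp at h'
      · exact ⟨W, p, by rw [h', List.concat_eq_append]⟩
    obtain ⟨q, V, hV⟩ : ∃ q V, Y₂ ++ [w] = q :: V := by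
      cases h' : Y₂ ++ [w] with
      | nil => simp at h'
      | cons q V => exact ⟨q, V, rfl⟩
    have hdec : A₀ ++ c :: (Y₁ ++ e :: Y₂ ++ [w]) = (A₀ ++ W) ++ p :: e :: q :: V := by
      calc A₀ ++ c :: (Y₁ ++ e :: Y₂ ++ [w]) = A₀ ++ (c :: Y₁) ++ e :: (Y₂ ++ [w]) := by simp
        _ = _ := by rw [hW, hV]; simp
    rw [hdec] at h₀
    have hnd : (c :: Y₁ ++ e :: (Y₂ ++ [w])).Nodup := by simpa using ndB₀
    rw [List.nodup_middle, List.nodup_cons] at hnd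
    have hT := hrot ((Y₂ ++ [w]) ++ B.reverse ++ c :: Y₁)
      (by intro x hx; simp at hx ⊢; tauto) (by
      intro H
      simp only [List.mem_append, List.mem_reverse, or_assoc] at H
      have h1 := hnd.1
      have h2 : e ∉ B := fun h => hdis e h (by simp)
      simp only [List.mem_append] at h1
      tauto)
    have th : ((Y₂ ++ [w]) ++ B.reverse ++ c :: Y₁).head? = some q := by rw [hV]; simp
    have tl : ((Y₂ ++ [w]) ++ B.reverse ++ c :: Y₁).getLast? = some p := by rw [hW]; simp [List.getLast?_cons]
    have hseg := segT hT th tl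
    rw [segment_symm] at hseg
    have hcr' := h₀.cr_ne_zero hseg
    refine tip_false hb hP th tl ?_ hT hcr' (h₀.extIn hcr')
    have h2 : e :: ((Y₂ ++ [w]) ++ B.reverse ++ c :: Y₁ ++ [e]) =
      (e :: (Y₂ ++ w :: B.reverse)) ++ c :: (Y₁ ++ [e]) := by simp
    rw [h2, chn_split]
    have h3 : c :: (Y₁ ++ e :: Y₂) ++ w :: (B.reverse ++ [c]) =
      (c :: Y₁) ++ e :: ((Y₂ ++ w :: B.reverse) ++ [c]) := by simp
    rw [h3, chn_split] at hloop
    exact ⟨by simpa using hloop.2, by simpa using hloop.1⟩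
  · -- `e` lies on the second geodesic
    obtain ⟨Y₁, Y₂, rfl⟩ := List.append_of_mem he
    obtain ⟨W, p, hW⟩ : ∃ W p, c :: Y₁ = W ++ [p] := by
      rcases (c :: Y₁).eq_nil_or_concat with h' | ⟨W, p, h'⟩
      · simp at h'
      · exact ⟨W, p, by rw [h', List.concat_eq_append]⟩
    obtain ⟨q, V, rfl⟩ : ∃ q V, Y₂ = q :: V := by
      cases Y₂ with
      | nil =>
        rw [← List.cons_append] at hr
        simp [List.getLast?_cons] at hr
        exact absurd hr her
      | cons q V => exact ⟨q, V, rfl⟩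
    have hdec : A ++ c :: (Y₁ ++ e :: q :: V) = (A ++ W) ++ p :: e :: q :: V := by
      calc A ++ c :: (Y₁ ++ e :: q :: V) = A ++ (c :: Y₁) ++ e :: q :: V := by simp
        _ = _ := by rw [hW]; simp
    rw [hdec] at h
    have hnd : (c :: Y₁ ++ e :: (q :: V)).Nodup := by simpa using ndB
    rw [List.nodup_middle, List.nodup_cons] at hnd
    have hT := hrot ((Y₁.reverse ++ [c]) ++ (Y ++ [w]) ++ (q :: V).reverse)
      (by intro x hx; simp at hx ⊢; tauto) (by
      intro H
      have h1 := hnd.1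
      have h2 : e ∉ c :: (Y ++ [w]) := hdis e (by simp)
      simp only [List.mem_append, List.mem_reverse, List.mem_cons, List.not_mem_nil,
        or_false] at H h1 h2
      tauto)
    have th : ((Y₁.reverse ++ [c]) ++ (Y ++ [w]) ++ (q :: V).reverse).head? = some p := by
      have : Y₁.reverse ++ [c] = p :: W.reverse := by
        rw [← List.reverse_cons, hW]; simp
      rw [this]; simp
    have tl : ((Y₁.reverse ++ [c]) ++ (Y ++ [w]) ++ (q :: V).reverse).getLast? = some q := by
      simp [List.getLast?_cons]
    have hseg := segT hT th tl
    have hcr' := h.cr_ne_zero hseg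
    refine tip_false hb hP th tl ?_ hT ?_ (h.extIn hcr').symm
    · have h2 : e :: ((Y₁.reverse ++ [c]) ++ (Y ++ [w]) ++ (q :: V).reverse ++ [e]) =
        (e :: Y₁.reverse) ++ c :: ((Y ++ [w]) ++ (q :: V).reverse ++ [e]) := by simp
      rw [h2, chn_split]
      have h3 : c :: Y ++ w :: ((Y₁ ++ e :: q :: V).reverse ++ [c]) =
        (c :: (Y ++ [w]) ++ (q :: V).reverse) ++ e :: (Y₁.reverse ++ [c]) := by simp
      rw [h3, chn_split] at hloop
      exact ⟨by simpa using hloop.2, by simpa using hloop.1⟩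
    · rw [cr_swap]; exact neg_ne_zero.2 hcr'

/-! ### Empty triangles at a vertex -/

theorem pos_comb {s t p q : ℝ} (hs : 0 ≤ s) (ht : 0 ≤ t) (hst : s + t = 1) (hp : 0 < p)
    (hq : 0 < q) : 0 < s * p + t * q := by
  rcases hs.eq_or_lt with rfl | hs
  · have : t = 1 := by linarith
    subst this; simpa using hq
  · have := mul_pos hs hp
    have := mul_nonneg ht hq.le
    linarith

theorem mem_closure_of_ray {A : Set Pt} {x d : Pt} {δ : ℝ} (hδ : 0 < δ)
    (h : ∀ s, 0 < s → s < δ → x + s • d ∈ A) : x ∈ closure A := by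
  rw [Metric.mem_closure_iff]
  intro ε hε
  obtain ⟨η, hη, H⟩ := exists_small d hε
  have hm : 0 < min (δ / 2) η := lt_min (by linarith) hη
  refine ⟨x + min (δ / 2) η • d, h _ hm ?_, ?_⟩
  · have := min_le_left (δ / 2) η
    linarith
  · rw [dist_comm]
    refine H _ ?_ x
    rw [abs_of_pos hm]
    exact min_le_right _ _

/-- The open angle at `w` with sides in the directions `e₁` and `α e₁ + β e₂`. -/
def wedge (w e₁ e₂ : Pt) (α β : ℝ) : Set Pt :=
  {x | ∃ a b : ℝ, 0 < a ∧ 0 < b ∧ b * α < β * a ∧ x = w + a • e₁ + b • e₂}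

theorem convex_wedge (w e₁ e₂ : Pt) (α β : ℝ) : Convex ℝ (wedge w e₁ e₂ α β) := by
  rintro x ⟨a, b, ha, hb, hab, rfl⟩ y ⟨a', b', ha', hb', hab', rfl⟩ s t hs ht hst
  refine ⟨s * a + t * a', s * b + t * b', pos_comb hs ht hst ha ha', pos_comb hs ht hst hb hb',
    ?_, ?_⟩
  · have := pos_comb hs ht hst (sub_pos.2 hab) (sub_pos.2 hab')
    linarith
  · have : t = 1 - s := by linarith
    subst this
    module

namespace SimplePolygon

variable (S : SimplePolygon)

/-- Boundary points close to a vertex `w` lie on a ray from `w` to an adjacent vertex, which `w`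
sees. -/
theorem near_vertex {w : Pt} (hw : S.IsVertex w) : ∃ ε > 0, ∀ y ∈ frontier S.P, dist y w < ε →
    y ≠ w → ∃ r, S.IsVertex r ∧ segment ℝ w r ⊆ S.P ∧ ∃ t : ℝ, 0 < t ∧ y = w + t • (r - w) := by
  obtain ⟨p, q, ε, hε, -, -, sp, sq, -, hb, hv, -⟩ := S.local_frontier (S.vtx_mem hw)
  obtain ⟨vp, vq⟩ := hv hw
  refine ⟨ε, hε, fun y hy hd hne => ?_⟩
  have key : ∀ r, y ∈ segment ℝ w r → ∃ t : ℝ, 0 < t ∧ y = w + t • (r - w) := by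
    intro r hr
    obtain ⟨t, t0, -, rfl⟩ := mem_segment_iff_add.1 hr
    refine ⟨t, lt_of_le_of_ne t0 ?_, rfl⟩
    rintro rfl
    simp at hne
  rcases hb y hy hd with h | h
  · exact ⟨p, vp, sp.trans S.frontier_subset, key p h⟩
  · exact ⟨q, vq, sq.trans S.frontier_subset, key q h⟩

/-- Let `w` be a vertex that sees `w + e₁`. Between the direction `e₁` and any exterior point `y`
close to `w` there is a visible vertex (with coordinates `ρ₁, ρ₂` with respect to `e₁, e₂`). -/
theorem sector {w e₁ e₂ : Pt} (hw : S.IsVertex w) (hcr : cr e₁ e₂ ≠ 0)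
    (hseg : segment ℝ w (w + e₁) ⊆ S.P) :
    ∃ ε > 0, ∀ y, y ∉ S.P → dist y w < ε → ∀ α β : ℝ, 0 < α → 0 ≤ β →
      y = w + α • e₁ + β • e₂ → ∃ ρ₁ ρ₂ : ℝ, 0 < ρ₁ ∧ 0 ≤ ρ₂ ∧
        S.IsVertex (w + ρ₁ • e₁ + ρ₂ • e₂) ∧ segment ℝ w (w + ρ₁ • e₁ + ρ₂ • e₂) ⊆ S.P ∧
        ρ₂ * α < β * ρ₁ := by
  obtain ⟨ε₀, hε₀, hnear⟩ := S.near_vertex hw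
  have he₁ : e₁ ≠ 0 := by rintro rfl; simp [cr] at hcr
  refine ⟨min ε₀ ‖e₁‖, lt_min hε₀ (norm_pos_iff.2 he₁), fun y hy hd α β hα hβ hyE => ?_⟩
  set ε := min ε₀ ‖e₁‖ with hε
  rcases hβ.eq_or_lt with rfl | hβ
  · -- `y` lies on the visible segment
    exfalso
    apply hy
    rw [zero_smul, add_zero] at hyE
    rw [hyE]
    apply hseg
    have h1 : α * ‖e₁‖ < 1 * ‖e₁‖ := by
      have := hd.trans_le (min_le_right _ _)
      rw [hyE, dist_eq_norm, add_sub_cancel_left, norm_smul, Real.norm_eq_abs,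
        abs_of_pos hα] at this
      linarith
    have h2 := lt_of_mul_lt_mul_right h1 (norm_nonneg _)
    simpa using add_smul_mem_segment (o := w) (d := e₁) hα.le h2.le
  have hfin : ∀ x ∈ frontier S.P, dist x w < ε → ∀ a b : ℝ, 0 < a → 0 ≤ b → b * α < β * a →
      x = w + a • e₁ + b • e₂ → ∃ ρ₁ ρ₂ : ℝ, 0 < ρ₁ ∧ 0 ≤ ρ₂ ∧
        S.IsVertex (w + ρ₁ • e₁ + ρ₂ • e₂) ∧ segment ℝ w (w + ρ₁ • e₁ + ρ₂ • e₂) ⊆ S.P ∧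
        ρ₂ * α < β * ρ₁ := by
    intro x hx hxd a b ha hb hab hxE
    have hxw : x ≠ w := by
      intro h
      have h' : w + a • e₁ + b • e₂ = w + (0 : ℝ) • e₁ + (0 : ℝ) • e₂ := by
        rw [← hxE, h]; simp
      have := (cr_coords_inj hcr h').1
      linarith
    obtain ⟨r, vr, sr, t, ht, hxr⟩ := hnear x hx (hxd.trans_le (min_le_left _ _)) hxw
    have hr : r = w + (a / t) • e₁ + (b / t) • e₂ := by
      have h1 : t • (r - w) = a • e₁ + b • e₂ := by
        rw [hxE, add_assoc] at hxr
        exact (add_left_cancel hxr).symm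
      have h2 : r - w = t⁻¹ • (a • e₁ + b • e₂) := by
        rw [← h1, smul_smul, inv_mul_cancel₀ ht.ne', one_smul]
      rw [add_assoc, ← sub_eq_iff_eq_add', h2, div_eq_inv_mul, div_eq_inv_mul]
      module
    refine ⟨a / t, b / t, by positivity, by positivity, hr ▸ vr, hr ▸ sr, ?_⟩
    rw [div_mul_eq_mul_div, ← mul_div_assoc]
    gcongr
  set C := wedge w e₁ e₂ α β ∩ Metric.ball w ε with hC
  have hCc : Convex ℝ C := (convex_wedge _ _ _ _ _).inter (convex_ball _ _)
  by_cases hex : ∃ x ∈ C, x ∈ frontier S.P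
  · obtain ⟨x, ⟨⟨a, b, ha, hb, hab, hxE⟩, hxd⟩, hxf⟩ := hex
    exact hfin x hxf hxd a b ha hb.le hab hxE
  push Not at hex
  rcases S.ext_or_int hCc.isPreconnected hex with hc | hc
  · -- points on the segment close to `w` are boundary points
    obtain ⟨δ, hδ, H⟩ := exists_small e₁ (show 0 < ε from lt_min hε₀ (norm_pos_iff.2 he₁))
    set τ := min δ 1 with hτ
    have τ0 : 0 < τ := lt_min hδ one_pos
    have hxd : dist (w + τ • e₁) w < ε := H τ (by rw [abs_of_pos τ0]; exact min_le_left _ _) w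
    have hxP : w + τ • e₁ ∈ S.P := by
      apply hseg
      simpa using add_smul_mem_segment (o := w) (d := e₁) τ0.le (min_le_right δ 1)
    have hxc : w + τ • e₁ ∈ closure S.Pᶜ := by
      refine closure_mono hc ?_
      obtain ⟨η, hη, Hη⟩ := exists_small e₂ (sub_pos.2 hxd)
      refine mem_closure_of_ray (d := e₂) (lt_min hη (show 0 < β * τ / α by positivity)) ?_
      intro s hs hsm
      refine ⟨⟨τ, s, τ0, hs, ?_, rfl⟩, ?_⟩
      · have := hsm.trans_le (min_le_right _ _)
        rwa [lt_div_iff₀ hα] at this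
      · have := Hη s (by rw [abs_of_pos hs]; exact (hsm.trans_le (min_le_left _ _)).le)
          (w + τ • e₁)
        rw [Metric.mem_ball]
        have := dist_triangle (w + τ • e₁ + s • e₂) (w + τ • e₁) w
        linarith
    exact hfin _ (S.mem_frontier_of_closure hxP hxc) hxd τ 0 τ0 le_rfl (by
      rw [zero_mul]; positivity) (by simp)
  · exfalso
    apply hy
    rw [← S.isClosed_P.closure_eq]
    refine closure_mono (hc.trans interior_subset) ?_
    obtain ⟨η, hη, Hη⟩ := exists_small (-e₂) (sub_pos.2 hd)
    refine mem_closure_of_ray (d := -e₂) (lt_min hη hβ) ?_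
    intro s hs hsm
    refine ⟨⟨α, β - s, hα, ?_, ?_, ?_⟩, ?_⟩
    · exact sub_pos.2 (hsm.trans_le (min_le_right _ _))
    · nlinarith
    · rw [hyE]; module
    · have := Hη s (by rw [abs_of_pos hs]; exact (hsm.trans_le (min_le_left _ _)).le) y
      rw [Metric.mem_ball]
      have := dist_triangle (y + s • -e₂) y w
      linarith

/-- `local_half` in affine coordinates with respect to `w`, `e₁`, `e₂`: near a boundary point
that is not a vertex the exterior is given by a linear inequality with coefficients `x, y`. -/
theorem half_coords {w e₁ e₂ : Pt} (hcr : cr e₁ e₂ ≠ 0) {α₀ β₀ : ℝ}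
    (ho : w + α₀ • e₁ + β₀ • e₂ ∈ frontier S.P) (hv : ¬ S.IsVertex (w + α₀ • e₁ + β₀ • e₂)) :
    ∃ x y δ : ℝ, (x ≠ 0 ∨ y ≠ 0) ∧ 0 < δ ∧
      (∀ h k : ℝ, |h| ≤ δ → |k| ≤ δ →
        (w + (α₀ + h) • e₁ + (β₀ + k) • e₂ ∉ S.P ↔ 0 < h * x + k * y)) ∧
      ∃ αp βp αq βq τ : ℝ, S.IsVertex (w + αp • e₁ + βp • e₂) ∧
        S.IsVertex (w + αq • e₁ + βq • e₂) ∧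
        segment ℝ (w + αp • e₁ + βp • e₂) (w + αq • e₁ + βq • e₂) ⊆ frontier S.P ∧
        0 ≤ τ ∧ τ ≤ 1 ∧ α₀ = αp + τ * (αq - αp) ∧ β₀ = βp + τ * (βq - βp) ∧
        (αp - α₀) * x + (βp - β₀) * y = 0 ∧ (αq - α₀) * x + (βq - β₀) * y = 0 := by
  obtain ⟨d, hd, ε, hε, hloc, p, q, vp, vq, spq, opq, hp, hq⟩ := S.local_half ho hv
  obtain ⟨αp, βp, rfl⟩ := cr_exists_coords hcr w p
  obtain ⟨αq, βq, rfl⟩ := cr_exists_coords hcr w q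
  obtain ⟨δ₁, hδ₁, H₁⟩ := exists_small e₁ (half_pos hε)
  obtain ⟨δ₂, hδ₂, H₂⟩ := exists_small e₂ (half_pos hε)
  have lin : ∀ a b : ℝ, cr d (w + a • e₁ + b • e₂ - (w + α₀ • e₁ + β₀ • e₂)) =
      (a - α₀) * cr d e₁ + (b - β₀) * cr d e₂ := by
    intro a b
    simp [cr]; ring
  refine ⟨cr d e₁, cr d e₂, min δ₁ δ₂, ?_, lt_min hδ₁ hδ₂, ?_, ?_⟩
  · by_contra! H
    have hdd := cr_basis hcr d
    have h1 : cr d e₂ = 0 := H.2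
    have h2 : cr e₁ d = 0 := by rw [cr_swap, H.1, neg_zero]
    rw [h1, h2] at hdd
    apply hd
    simpa using hdd
  · intro h k hh hk
    have hd' : dist (w + (α₀ + h) • e₁ + (β₀ + k) • e₂) (w + α₀ • e₁ + β₀ • e₂) < ε := by
      have e : w + (α₀ + h) • e₁ + (β₀ + k) • e₂ =
        (w + α₀ • e₁ + β₀ • e₂ + h • e₁) + k • e₂ := by module
      have i1 := H₁ h (hh.trans (min_le_left _ _)) (w + α₀ • e₁ + β₀ • e₂)
      have i2 := H₂ k (hk.trans (min_le_right _ _)) (w + α₀ • e₁ + β₀ • e₂ + h • e₁)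
      rw [e]
      have := dist_triangle (w + α₀ • e₁ + β₀ • e₂ + h • e₁ + k • e₂)
        (w + α₀ • e₁ + β₀ • e₂ + h • e₁) (w + α₀ • e₁ + β₀ • e₂)
      linarith
    rw [hloc _ hd', lin]
    simp
  · obtain ⟨τ, τ0, τ1, hτ⟩ := mem_segment_iff_add.1 opq
    have hτ' : w + α₀ • e₁ + β₀ • e₂ =
        w + (αp + τ * (αq - αp)) • e₁ + (βp + τ * (βq - βp)) • e₂ := by
      rw [hτ]; module
    obtain ⟨ha, hb⟩ := cr_coords_inj hcr hτ'
    rw [lin] at hp hq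
    exact ⟨αp, βp, αq, βq, τ, vp, vq, spq, τ0, τ1, ha, hb, hp, hq⟩

end SimplePolygon

namespace SimplePolygon

variable (S : SimplePolygon)

set_option maxHeartbeats 2000000 in
/-- Let `w` see `w + e₁` and `w + e₂`, and let `α + β = α₀ + β₀` be the first line parallel to
the third side of the triangle `w, w + e₁, w + e₂` that touches the exterior, at `(α₀, β₀)`. Then
this line contains a vertex in the triangle. Otherwise the region is a half-plane near the contact
point. A contact point on a side of the triangle is impossible, since the side is contained in the
region; and if the contact point is inside the triangle, its edge is parallel to the sweep line
and extends beyond the triangle, so that it crosses the sides. -/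
theorem top_contact {w e₁ e₂ : Pt} (hcr : cr e₁ e₂ ≠ 0)
    (s1 : segment ℝ w (w + e₁) ⊆ S.P) (s2 : segment ℝ w (w + e₂) ⊆ S.P)
    {α₀ β₀ : ℝ} (hα : 0 ≤ α₀) (hβ : 0 ≤ β₀) (h0 : 0 < α₀ + β₀) (h1 : α₀ + β₀ < 1)
    (hin : ∀ a b : ℝ, 0 ≤ a → 0 ≤ b → a + b ≤ α₀ + β₀ → w + a • e₁ + b • e₂ ∈ S.P)
    (hout : ∀ ε > 0, ∃ h k : ℝ, |h| ≤ ε ∧ |k| ≤ ε ∧ 0 ≤ α₀ + h ∧ 0 ≤ β₀ + k ∧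
      w + (α₀ + h) • e₁ + (β₀ + k) • e₂ ∉ S.P) :
    ∃ a b : ℝ, 0 ≤ a ∧ 0 ≤ b ∧ a + b = α₀ + β₀ ∧ S.IsVertex (w + a • e₁ + b • e₂) := by
  by_contra! hnv
  have ho : w + α₀ • e₁ + β₀ • e₂ ∈ frontier S.P := by
    refine S.mem_frontier_of_closure (hin _ _ hα hβ le_rfl) ?_
    rw [Metric.mem_closure_iff]
    intro ε hε
    obtain ⟨δ₁, hδ₁, H₁⟩ := exists_small e₁ (half_pos hε)
    obtain ⟨δ₂, hδ₂, H₂⟩ := exists_small e₂ (half_pos hε)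
    obtain ⟨h, k, hh, hk, -, -, hP⟩ := hout (min δ₁ δ₂) (lt_min hδ₁ hδ₂)
    refine ⟨_, hP, ?_⟩
    rw [dist_comm]
    have e : w + (α₀ + h) • e₁ + (β₀ + k) • e₂ =
      (w + α₀ • e₁ + β₀ • e₂ + h • e₁) + k • e₂ := by module
    have i1 := H₁ h (hh.trans (min_le_left _ _)) (w + α₀ • e₁ + β₀ • e₂)
    have i2 := H₂ k (hk.trans (min_le_right _ _)) (w + α₀ • e₁ + β₀ • e₂ + h • e₁)
    rw [e]
    have := dist_triangle (w + α₀ • e₁ + β₀ • e₂ + h • e₁ + k • e₂)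
      (w + α₀ • e₁ + β₀ • e₂ + h • e₁) (w + α₀ • e₁ + β₀ • e₂)
    linarith
  have side1 : ∀ a : ℝ, 0 ≤ a → a ≤ 1 → w + a • e₁ + (0 : ℝ) • e₂ ∈ S.P := by
    intro a a0 a1
    apply s1
    simpa using add_smul_mem_segment (o := w) (d := e₁) a0 a1
  have side2 : ∀ b : ℝ, 0 ≤ b → b ≤ 1 → w + (0 : ℝ) • e₁ + b • e₂ ∈ S.P := by
    intro b b0 b1
    apply s2
    simpa using add_smul_mem_segment (o := w) (d := e₂) b0 b1
  obtain ⟨x, y, δ, hxy, hδ, hloc, αp, βp, αq, βq, τ, vp, vq, spq, τ0, τ1, eα, eβ, ep, eq⟩ :=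
    S.half_coords hcr ho (hnv _ _ hα hβ rfl)
  have hPle : ∀ h k : ℝ, |h| ≤ δ → |k| ≤ δ → w + (α₀ + h) • e₁ + (β₀ + k) • e₂ ∈ S.P →
      h * x + k * y ≤ 0 := by
    intro h k hh hk hP
    by_contra! H
    exact (hloc h k hh hk).2 H hP
  obtain ⟨h, k, hh, hk, h0', k0', hP⟩ := hout δ hδ
  have hpos := (hloc h k hh hk).1 hP
  rcases hα.eq_or_lt with rfl | hα'
  · -- contact on the side `e₂`
    rw [zero_add] at h0 h1 h0'
    set η := min (δ / 2) (min (β₀ / 2) ((1 - β₀) / 2)) with hη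
    have η0 : 0 < η := lt_min (by linarith) (lt_min (by linarith) (by linarith))
    have η1 : η ≤ δ / 2 := min_le_left _ _
    have η2 : η ≤ β₀ / 2 := (min_le_right _ _).trans (min_le_left _ _)
    have η3 : η ≤ (1 - β₀) / 2 := (min_le_right _ _).trans (min_le_right _ _)
    have i1 := hPle 0 η (by simpa using hδ.le) (by rw [abs_of_pos η0]; linarith) (by
      rw [add_zero]; exact side2 _ (by linarith) (by linarith))
    have i2 := hPle 0 (-η) (by simpa using hδ.le)
      (by rw [abs_neg, abs_of_pos η0]; linarith) (by
      rw [add_zero]; exact side2 _ (by linarith) (by linarith))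
    have hy : y = 0 := by
      rcases lt_trichotomy y 0 with h | h | h
      · nlinarith
      · exact h
      · nlinarith
    have i3 := hPle η (-2 * η) (by rw [abs_of_pos η0]; linarith)
      (by rw [abs_mul, abs_of_pos η0]; norm_num; linarith)
      (hin _ _ (by linarith) (by linarith) (by linarith))
    rw [hy] at hpos i3
    nlinarith
  rcases hβ.eq_or_lt with rfl | hβ'
  · -- contact on the side `e₁`
    rw [add_zero] at h0 h1
    rw [zero_add] at k0'
    set η := min (δ / 2) (min (α₀ / 2) ((1 - α₀) / 2)) with hη
    have η0 : 0 < η := lt_min (by linarith) (lt_min (by linarith) (by linarith))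
    have η1 : η ≤ δ / 2 := min_le_left _ _
    have η2 : η ≤ α₀ / 2 := (min_le_right _ _).trans (min_le_left _ _)
    have η3 : η ≤ (1 - α₀) / 2 := (min_le_right _ _).trans (min_le_right _ _)
    have i1 := hPle η 0 (by rw [abs_of_pos η0]; linarith) (by simpa using hδ.le) (by
      rw [add_zero]; exact side1 _ (by linarith) (by linarith))
    have i2 := hPle (-η) 0 (by rw [abs_neg, abs_of_pos η0]; linarith)
      (by simpa using hδ.le) (by
      rw [add_zero]; exact side1 _ (by linarith) (by linarith))
    have hx : x = 0 := by
      rcases lt_trichotomy x 0 with h | h | h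
      · nlinarith
      · exact h
      · nlinarith
    have i3 := hPle (-2 * η) η (by rw [abs_mul, abs_of_pos η0]; norm_num; linarith)
      (by rw [abs_of_pos η0]; linarith)
      (hin _ _ (by linarith) (by linarith) (by linarith))
    rw [hx] at hpos i3
    nlinarith
  -- contact in the interior of the triangle: the boundary edge is parallel to the sweep line
  have hyx : x = y ∧ 0 < x := by
    set η := min δ (min α₀ β₀) with hη
    have η0 : 0 < η := lt_min hδ (lt_min hα' hβ')
    have η1 : η ≤ δ := min_le_left _ _
    have η2 : η ≤ α₀ := (min_le_right _ _).trans (min_le_left _ _)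
    have η3 : η ≤ β₀ := (min_le_right _ _).trans (min_le_right _ _)
    have i1 := hPle η (-η) (by rw [abs_of_pos η0]; linarith)
      (by rw [abs_neg, abs_of_pos η0]; linarith)
      (hin _ _ (by linarith) (by linarith) (by linarith))
    have i2 := hPle (-η) η (by rw [abs_neg, abs_of_pos η0]; linarith)
      (by rw [abs_of_pos η0]; linarith)
      (hin _ _ (by linarith) (by linarith) (by linarith))
    have i3 := hPle (-η) (-η) (by rw [abs_neg, abs_of_pos η0]; linarith)
      (by rw [abs_neg, abs_of_pos η0]; linarith)
      (hin _ _ (by linarith) (by linarith) (by linarith))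
    have e : x = y := by
      rcases lt_trichotomy x y with h | h | h
      · nlinarith
      · exact h
      · nlinarith
    refine ⟨e, ?_⟩
    subst e
    have hx0 : x ≠ 0 := by tauto
    refine lt_of_le_of_ne ?_ hx0.symm
    nlinarith
  obtain ⟨rfl, hx⟩ := hyx
  have ep' : αp + βp = α₀ + β₀ := by
    have : (αp + βp - (α₀ + β₀)) * x = 0 := by linarith
    have := (mul_eq_zero.1 this).resolve_right hx.ne'
    linarith
  have eq' : αq + βq = α₀ + β₀ := by
    have : (αq + βq - (α₀ + β₀)) * x = 0 := by linarith
    have := (mul_eq_zero.1 this).resolve_right hx.ne'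
    linarith
  have np : ¬ (0 ≤ αp ∧ 0 ≤ βp) := fun H => hnv _ _ H.1 H.2 ep' vp
  have nq : ¬ (0 ≤ αq ∧ 0 ≤ βq) := fun H => hnv _ _ H.1 H.2 eq' vq
  set s := α₀ + β₀ with hs
  -- hence the edge covers the whole sweep line inside the triangle
  have hline : ∃ σ₀ > 0, ∀ σ : ℝ, |σ| ≤ σ₀ →
      w + (s + σ) • e₁ + (-σ) • e₂ ∈ frontier S.P := by
    have hτ1 : 0 ≤ 1 - τ := by linarith
    have key : (αp < 0 ∧ s < αq) ∨ (αq < 0 ∧ s < αp) := by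
      rcases lt_or_ge αp 0 with h | h
      · left
        refine ⟨h, ?_⟩
        rcases lt_or_ge αq 0 with h' | h'
        · exfalso; nlinarith
        · have : βq < 0 := not_le.1 fun H => nq ⟨h', H⟩
          linarith
      · right
        have hb : βp < 0 := not_le.1 fun H => np ⟨h, H⟩
        refine ⟨?_, by linarith⟩
        by_contra! h'
        have : βq < 0 := not_le.1 fun H => nq ⟨h', H⟩
        nlinarith
    have cover : ∀ a : ℝ, (αp ≤ a ∧ a ≤ αq) ∨ (αq ≤ a ∧ a ≤ αp) → αp ≠ αq →
        w + a • e₁ + (s - a) • e₂ ∈ frontier S.P := by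
      intro a ha hne
      apply spq
      have hne' : αq - αp ≠ 0 := sub_ne_zero.2 hne.symm
      refine mem_segment_iff_add.2 ⟨(a - αp) / (αq - αp), ?_, ?_, ?_⟩
      · rcases ha with ha | ha
        · exact div_nonneg (by linarith) (by linarith)
        · exact div_nonneg_of_nonpos (by linarith) (by linarith)
      · rcases ha with ha | ha
        · exact div_le_one_of_le₀ (by linarith) (by linarith)
        · exact div_le_one_of_ge (by linarith) (by linarith)
      · have hb1 : βp = s - αp := by linarith
        have hb2 : βq = s - αq := by linarith
        rw [hb1, hb2]
        set t := (a - αp) / (αq - αp) with ht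
        have hat : a = αp + t * (αq - αp) := by rw [ht]; field_simp; ring
        rw [hat]
        module
    rcases key with ⟨k1, k2⟩ | ⟨k1, k2⟩
    · refine ⟨min s (αq - s), lt_min h0 (by linarith), fun σ hσ => ?_⟩
      have a1 := (abs_le.1 (hσ.trans (min_le_left _ _))).1
      have a2 := (abs_le.1 (hσ.trans (min_le_right _ _))).2
      have := cover (s + σ) (Or.inl ⟨by linarith, by linarith⟩) (by linarith)
      rwa [show s - (s + σ) = -σ by ring] at this
    · refine ⟨min s (αp - s), lt_min h0 (by linarith), fun σ hσ => ?_⟩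
      have a1 := (abs_le.1 (hσ.trans (min_le_left _ _))).1
      have a2 := (abs_le.1 (hσ.trans (min_le_right _ _))).2
      have := cover (s + σ) (Or.inr ⟨by linarith, by linarith⟩) (by linarith)
      rwa [show s - (s + σ) = -σ by ring] at this
  obtain ⟨σ₀, hσ₀, hline⟩ := hline
  have hcf := hline 0 (by simpa using hσ₀.le)
  rw [add_zero, neg_zero] at hcf
  obtain ⟨x', y', δ', hxy', hδ', hloc', -⟩ :=
    S.half_coords hcr hcf (hnv _ _ h0.le le_rfl (add_zero s))
  have hPle' : ∀ h k : ℝ, |h| ≤ δ' → |k| ≤ δ' → w + (s + h) • e₁ + (0 + k) • e₂ ∈ S.P →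
      h * x' + k * y' ≤ 0 := by
    intro h k hh hk hP
    by_contra! H
    exact (hloc' h k hh hk).2 H hP
  set η := min (min σ₀ δ') (min s (1 - s)) with hη
  have η0 : 0 < η := lt_min (lt_min hσ₀ hδ') (lt_min h0 (by linarith))
  have η1 : η ≤ σ₀ := (min_le_left _ _).trans (min_le_left _ _)
  have η2 : η ≤ δ' := (min_le_left _ _).trans (min_le_right _ _)
  have η3 : η ≤ s := (min_le_right _ _).trans (min_le_left _ _)
  have η4 : η ≤ 1 - s := (min_le_right _ _).trans (min_le_right _ _)
  have ηa : |η| ≤ δ' := by rwa [abs_of_pos η0]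
  have ηb : |-η| ≤ δ' := by rwa [abs_neg, abs_of_pos η0]
  have i1 := hPle' η 0 ηa (by simpa using hδ'.le) (by
    rw [add_zero]; exact side1 _ (by linarith) (by linarith))
  have i2 := hPle' (-η) 0 ηb (by simpa using hδ'.le) (by
    rw [add_zero]; exact side1 _ (by linarith) (by linarith))
  have i3 := hPle' η (-η) ηa ηb (by
    rw [zero_add]; exact S.frontier_subset (hline η (by rwa [abs_of_pos η0])))
  have i4 := hPle' (-η) η ηb ηa (by
    have := S.frontier_subset (hline (-η) (by rwa [abs_neg, abs_of_pos η0]))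
    rw [neg_neg] at this
    rwa [zero_add])
  have hx' : x' = 0 := by
    rcases lt_trichotomy x' 0 with h | h | h
    · nlinarith
    · exact h
    · nlinarith
  subst hx'
  have hy' : y' = 0 := by
    rcases lt_trichotomy y' 0 with h | h | h
    · nlinarith
    · exact h
    · nlinarith
  tauto

end SimplePolygon

namespace SimplePolygon

variable (S : SimplePolygon)

/-- Let `w` see `w + e₁` and `w + e₂`. If the triangle `w, w + e₁, w + e₂` meets the exterior, but
not close to `w`, then sweep it from `w` by lines parallel to the opposite side: the first of
these lines that touches the exterior contains a vertex, and `w` sees this vertex. -/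
theorem top {w e₁ e₂ : Pt} (hcr : cr e₁ e₂ ≠ 0)
    (s1 : segment ℝ w (w + e₁) ⊆ S.P) (s2 : segment ℝ w (w + e₂) ⊆ S.P)
    (hnear : ∃ ε > 0, ∀ α β : ℝ, 0 ≤ α → 0 ≤ β → dist (w + α • e₁ + β • e₂) w < ε →
      w + α • e₁ + β • e₂ ∈ S.P)
    (hex : ∃ α β : ℝ, 0 ≤ α ∧ 0 ≤ β ∧ α + β ≤ 1 ∧ w + α • e₁ + β • e₂ ∉ S.P) :
    ∃ a b : ℝ, 0 ≤ a ∧ 0 ≤ b ∧ 0 < a + b ∧ a + b < 1 ∧ S.IsVertex (w + a • e₁ + b • e₂) ∧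
      segment ℝ w (w + a • e₁ + b • e₂) ⊆ S.P := by
  set D : Set (ℝ × ℝ) :=
    {q | 0 ≤ q.1 ∧ 0 ≤ q.2 ∧ q.1 + q.2 ≤ 1 ∧ w + q.1 • e₁ + q.2 • e₂ ∉ S.P} with hD
  have hT : closure D ⊆ Icc ((0 : ℝ), (0 : ℝ)) (1, 1) := by
    refine closure_minimal ?_ isClosed_Icc
    rintro ⟨a, b⟩ ⟨h1, h2, h3, -⟩
    simp only at h1 h2 h3
    exact ⟨⟨h1, h2⟩, ⟨by simp only; linarith, by simp only; linarith⟩⟩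
  have hK : IsCompact (closure D) := isCompact_Icc.of_isClosed_subset isClosed_closure hT
  obtain ⟨α', β', hα', hβ', hαβ', hout'⟩ := hex
  have hne : (closure D).Nonempty := ⟨(α', β'), subset_closure ⟨hα', hβ', hαβ', hout'⟩⟩
  obtain ⟨⟨α₀, β₀⟩, hq, hmin⟩ := hK.exists_isMinOn hne
    (f := fun q : ℝ × ℝ => q.1 + q.2) (by fun_prop)
  have hα : 0 ≤ α₀ := (hT hq).1.1
  have hβ : 0 ≤ β₀ := (hT hq).1.2
  have hmin' : ∀ a b : ℝ, 0 ≤ a → 0 ≤ b → a + b ≤ 1 → w + a • e₁ + b • e₂ ∉ S.P →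
      α₀ + β₀ ≤ a + b := fun a b ha hb hab h =>
    hmin (subset_closure (show ((a, b) : ℝ × ℝ) ∈ D from ⟨ha, hb, hab, h⟩))
  have hout : ∀ ε > 0, ∃ h k : ℝ, |h| ≤ ε ∧ |k| ≤ ε ∧ 0 ≤ α₀ + h ∧ 0 ≤ β₀ + k ∧
      w + (α₀ + h) • e₁ + (β₀ + k) • e₂ ∉ S.P := by
    intro ε hε
    obtain ⟨⟨a, b⟩, ⟨h1, h2, -, h4⟩, hd⟩ := Metric.mem_closure_iff.1 hq ε hε
    rw [dist_comm, Prod.dist_eq, max_lt_iff, Real.dist_eq, Real.dist_eq] at hd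
    refine ⟨a - α₀, b - β₀, hd.1.le, hd.2.le, ?_⟩
    rw [add_sub_cancel, add_sub_cancel]
    exact ⟨h1, h2, h4⟩
  have h0 : 0 < α₀ + β₀ := by
    by_contra! H
    obtain rfl : α₀ = 0 := by linarith
    obtain rfl : β₀ = 0 := by linarith
    obtain ⟨ε, hε, hn⟩ := hnear
    obtain ⟨δ₁, hδ₁, H₁⟩ := exists_small e₁ (half_pos hε)
    obtain ⟨δ₂, hδ₂, H₂⟩ := exists_small e₂ (half_pos hε)
    obtain ⟨h, k, hh, hk, h0, k0, hP⟩ := hout (min δ₁ δ₂) (lt_min hδ₁ hδ₂)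
    refine hP (hn _ _ h0 k0 ?_)
    rw [zero_add, zero_add]
    have i1 := H₁ h (hh.trans (min_le_left _ _)) w
    have i2 := H₂ k (hk.trans (min_le_right _ _)) (w + h • e₁)
    have := dist_triangle (w + h • e₁ + k • e₂) (w + h • e₁) w
    linarith
  have h1 : α₀ + β₀ < 1 := by
    -- an exterior point can be moved slightly towards `w`
    obtain ⟨ε, hε, hb⟩ := Metric.isOpen_iff.1 S.isClosed_P.isOpen_compl _ hout'
    obtain ⟨δ, hδ, Hδ⟩ := exists_small (-(α' • e₁ + β' • e₂)) hε
    set t := min δ 1 with ht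
    have t0 : 0 < t := lt_min hδ one_pos
    have t1 : t ≤ 1 := min_le_right _ _
    have hP := hb (Metric.mem_ball.2
      (Hδ t (by rw [abs_of_pos t0]; exact min_le_left _ _) (w + α' • e₁ + β' • e₂)))
    have e : w + α' • e₁ + β' • e₂ + t • -(α' • e₁ + β' • e₂) =
      w + ((1 - t) * α') • e₁ + ((1 - t) * β') • e₂ := by module
    rw [e] at hP
    have m1 := hmin' α' β' hα' hβ' hαβ' hout'
    have a1 : 0 ≤ (1 - t) * α' := mul_nonneg (by linarith) hα'
    have a2 : 0 ≤ (1 - t) * β' := mul_nonneg (by linarith) hβ'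
    have a3 : 0 < t * (α' + β') := mul_pos t0 (by linarith)
    have := hmin' _ _ a1 a2 (by linarith) hP
    linarith
  have hin : ∀ a b : ℝ, 0 ≤ a → 0 ≤ b → a + b ≤ α₀ + β₀ → w + a • e₁ + b • e₂ ∈ S.P := by
    have hlt : ∀ a b : ℝ, 0 ≤ a → 0 ≤ b → a + b < α₀ + β₀ → w + a • e₁ + b • e₂ ∈ S.P := by
      intro a b ha hb hab
      by_contra H
      have := hmin' a b ha hb (by linarith) H
      linarith
    intro a b ha hb hab
    rcases hab.lt_or_eq with h | h
    · exact hlt a b ha hb h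
    rw [← S.isClosed_P.closure_eq]
    refine mem_closure_of_ray (d := -(a • e₁ + b • e₂)) one_pos fun s hs hs1 => ?_
    have e : w + a • e₁ + b • e₂ + s • -(a • e₁ + b • e₂) =
      w + ((1 - s) * a) • e₁ + ((1 - s) * b) • e₂ := by module
    rw [e]
    have : 0 < s * (a + b) := mul_pos hs (by linarith)
    exact hlt _ _ (mul_nonneg (by linarith) ha) (mul_nonneg (by linarith) hb) (by linarith)
  obtain ⟨a, b, ha, hb, hab, hv⟩ := S.top_contact hcr s1 s2 hα hβ h0 h1 hin hout
  refine ⟨a, b, ha, hb, by linarith, by linarith, hv, ?_⟩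
  intro x hx
  obtain ⟨t, t0, t1, rfl⟩ := mem_segment_iff_add.1 hx
  have e : w + t • (w + a • e₁ + b • e₂ - w) = w + (t * a) • e₁ + (t * b) • e₂ := by module
  rw [e]
  have := mul_nonneg (sub_nonneg.2 t1) (add_nonneg ha hb)
  exact hin _ _ (mul_nonneg t0 ha) (mul_nonneg t0 hb) (by linarith)

/-- Among the vertices visible from the vertex `w` in the half-open half-plane
`{w + α e₁ + β e₂ | 0 < α, 0 ≤ β}` let `r` be the first one in angular order from `w + e₁` (and the
closest one among those with the same direction). Then the triangle `w, w + e₁, r` is contained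
in `P`, and the exterior avoids the angle between `w + e₁` and `r` near `w`. -/
theorem exists_empty {w e₁ e₂ : Pt} (hw : S.IsVertex w) (hcr : cr e₁ e₂ ≠ 0)
    (hseg : segment ℝ w (w + e₁) ⊆ S.P)
    (hex : ∃ ρ₁ ρ₂ : ℝ, 0 < ρ₁ ∧ 0 ≤ ρ₂ ∧ S.IsVertex (w + ρ₁ • e₁ + ρ₂ • e₂) ∧
      segment ℝ w (w + ρ₁ • e₁ + ρ₂ • e₂) ⊆ S.P) :
    ∃ ρ₁ ρ₂ : ℝ, 0 < ρ₁ ∧ 0 ≤ ρ₂ ∧ S.IsVertex (w + ρ₁ • e₁ + ρ₂ • e₂) ∧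
      segment ℝ w (w + ρ₁ • e₁ + ρ₂ • e₂) ⊆ S.P ∧
      (∀ s ∈ segment ℝ w (w + ρ₁ • e₁ + ρ₂ • e₂), segment ℝ s (w + e₁) ⊆ S.P) ∧
      ∃ ε > 0, ∀ y, y ∉ S.P → dist y w < ε → ∀ α β : ℝ, 0 < α → 0 ≤ β →
        y = w + α • e₁ + β • e₂ → ρ₂ * α < β * ρ₁ := by
  set A : Set (ℝ × ℝ) := {ρ | 0 < ρ.1 ∧ 0 ≤ ρ.2 ∧ S.IsVertex (w + ρ.1 • e₁ + ρ.2 • e₂) ∧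
    segment ℝ w (w + ρ.1 • e₁ + ρ.2 • e₂) ⊆ S.P} with hA
  have hVfin : {x | S.IsVertex x}.Finite := by
    refine ((Finset.range S.n).finite_toSet.image S.vtx).subset ?_
    rintro x ⟨i, hi, rfl⟩
    exact ⟨i, by simpa using hi, rfl⟩
  have hAfin : A.Finite := by
    refine (hVfin.preimage (f := fun ρ : ℝ × ℝ => w + ρ.1 • e₁ + ρ.2 • e₂) ?_).subset
      fun ρ hρ => hρ.2.2.1
    intro p _ q _ h
    exact Prod.ext (cr_coords_inj hcr h).1 (cr_coords_inj hcr h).2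
  obtain ⟨a, b, hab⟩ := hex
  obtain ⟨⟨ρ₁, ρ₂⟩, ⟨h1, h2, hv, hs⟩, hmin⟩ := Set.exists_min_image A
    (fun ρ => toLex (ρ.2 / ρ.1, ρ.1)) hAfin ⟨(a, b), hab⟩
  simp only at h1 h2 hv hs
  have hmin' : ∀ a b : ℝ, 0 < a → 0 ≤ b → S.IsVertex (w + a • e₁ + b • e₂) →
      segment ℝ w (w + a • e₁ + b • e₂) ⊆ S.P →
      ρ₂ * a < b * ρ₁ ∨ (ρ₂ * a = b * ρ₁ ∧ ρ₁ ≤ a) := by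
    intro a b ha hb hv hs
    have := hmin (a, b) ⟨ha, hb, hv, hs⟩
    rw [Prod.Lex.toLex_le_toLex] at this
    simp only at this
    rwa [div_lt_div_iff₀ h1 ha, div_eq_div_iff h1.ne' ha.ne'] at this
  have hlast : ∃ ε > 0, ∀ y, y ∉ S.P → dist y w < ε → ∀ α β : ℝ, 0 < α → 0 ≤ β →
        y = w + α • e₁ + β • e₂ → ρ₂ * α < β * ρ₁ := by
    obtain ⟨ε, hε, H⟩ := S.sector hw hcr hseg
    refine ⟨ε, hε, fun y hy hd α β hα hβ hE => ?_⟩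
    obtain ⟨a, b, ha, hb, hv', hs', hlt⟩ := H y hy hd α β hα hβ hE
    have hle : ρ₂ * a ≤ b * ρ₁ := by
      rcases hmin' a b ha hb hv' hs' with h | h
      · exact h.le
      · exact h.1.le
    have i1 : ρ₂ * a * α ≤ b * ρ₁ * α := by gcongr
    have i2 : b * α * ρ₁ < β * a * ρ₁ := by gcongr
    refine lt_of_mul_lt_mul_right (a := a) ?_ ha.le
    linarith
  refine ⟨ρ₁, ρ₂, h1, h2, hv, hs, ?_, hlast⟩
  -- the triangle with vertices `w`, `w + e₁` and `r`
  have htri : ∀ a b : ℝ, 0 ≤ a → 0 ≤ b → a + b ≤ 1 →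
      w + a • e₁ + b • (ρ₁ • e₁ + ρ₂ • e₂) ∈ S.P := by
    have hr : w + ρ₁ • e₁ + ρ₂ • e₂ = w + (ρ₁ • e₁ + ρ₂ • e₂) := add_assoc _ _ _
    rcases h2.eq_or_lt with rfl | h2
    · intro a b ha hb hab
      have e : w + a • e₁ + b • (ρ₁ • e₁ + (0 : ℝ) • e₂) = w + (a + b * ρ₁) • e₁ := by module
      rw [e]
      rcases le_total ρ₁ 1 with h | h
      · apply hseg
        have : b * ρ₁ ≤ b * 1 := by gcongr
        simpa using add_smul_mem_segment (o := w) (d := e₁)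
          (show 0 ≤ a + b * ρ₁ by positivity) (by linarith : a + b * ρ₁ ≤ 1)
      · apply hs
        rw [zero_smul, add_zero]
        refine add_smul_mem_segment (by positivity) ?_
        nlinarith
    · by_contra! H
      have hcr' : cr e₁ (ρ₁ • e₁ + ρ₂ • e₂) ≠ 0 := by
        rw [cr_add_right, cr_smul_right, cr_smul_right, cr_self, mul_zero, zero_add]
        exact mul_ne_zero h2.ne' hcr
      have conv : ∀ a b : ℝ, w + a • e₁ + b • (ρ₁ • e₁ + ρ₂ • e₂) =
          w + (a + b * ρ₁) • e₁ + (b * ρ₂) • e₂ := fun a b => by module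
      obtain ⟨a, b, ha, hb, hab0, hab1, hv', hs'⟩ := S.top hcr' hseg (hr ▸ hs) (by
        obtain ⟨ε, hε, hl⟩ := hlast
        refine ⟨ε, hε, fun α β hα hβ hd => ?_⟩
        by_contra hP
        rcases hα.eq_or_lt with rfl | hα'
        · rcases hβ.eq_or_lt with rfl | hβ'
          · apply hP
            simpa using hseg (left_mem_segment ℝ _ _)
          · have := hl _ hP hd (0 + β * ρ₁) (β * ρ₂) (by positivity) (by positivity) (conv _ _)
            linarith
        · have := hl _ hP hd (α + β * ρ₁) (β * ρ₂) (by positivity) (by positivity) (conv _ _)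
          have := mul_pos h2 hα'
          linarith) H
      rw [conv] at hv' hs'
      have hpos : 0 < a + b * ρ₁ := by
        rcases ha.eq_or_lt with rfl | ha'
        · have := mul_pos (show 0 < b by linarith) h1
          linarith
        · positivity
      rcases hmin' _ _ hpos (by positivity) hv' hs' with h | ⟨h, h'⟩
      · have := mul_nonneg h2.le ha
        linarith
      · have : ρ₂ * a = 0 := by linarith
        have ha0 : a = 0 := (mul_eq_zero.1 this).resolve_left h2.ne'
        subst ha0
        nlinarith
  intro s hsr x hx
  obtain ⟨t, t0, t1, rfl⟩ := mem_segment_iff_add.1 hsr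
  obtain ⟨k, k0, k1, rfl⟩ := mem_segment_iff_add.1 hx
  have e : w + t • (w + ρ₁ • e₁ + ρ₂ • e₂ - w) +
      k • (w + e₁ - (w + t • (w + ρ₁ • e₁ + ρ₂ • e₂ - w))) =
      w + k • e₁ + ((1 - k) * t) • (ρ₁ • e₁ + ρ₂ • e₂) := by module
  rw [e]
  have : (1 - k) * t ≤ (1 - k) * 1 := by gcongr
  exact htri _ _ k0 (mul_nonneg (by linarith) t0) (by linarith)

end SimplePolygon

/-- If a geodesic joins two points that see each other, then its last but one vertex lies on the
segment between them. -/
theorem IsGeodesic.straight {P : Set Pt} {a b s : Pt} {l : List Pt}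
    (h : IsGeodesic P a b (l ++ [s, b])) (hab : segment ℝ a b ⊆ P) : s ∈ segment ℝ a b := by
  have h1 := h.2 [a, b] (IsPathIn.mk' (by simp) (by simp) (by simpa using hab))
  obtain ⟨l', hl'⟩ := h.1.exists_cons
  cases l with
  | nil =>
    obtain ⟨rfl, -⟩ := by simpa using hl'
    exact left_mem_segment ℝ _ _
  | cons c l =>
    obtain ⟨rfl, -⟩ := by simpa using hl'
    rw [pathLen_split] at h1
    have h2 := dist_le_pathLen l c s
    simp only [pathLen, List.cons_append] at h1 h2
    rw [mem_segment_iff_wbtw, ← dist_add_dist_eq_iff]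
    have := dist_triangle c s b
    linarith

/-- If `w` is a vertex of a geodesic to `r` and sees `r`, then the last but one vertex of the
geodesic lies on the segment `wr`. -/
theorem IsGeodesic.straight_of_mem {P : Set Pt} {u w r s : Pt} {l : List Pt}
    (h : IsGeodesic P u r (l ++ [s, r])) (hwr : segment ℝ w r ⊆ P) (hw : w ∈ l ++ [s]) :
    s ∈ segment ℝ w r := by
  obtain ⟨X, Y, hXY⟩ := List.append_of_mem hw
  have e : l ++ [s, r] = X ++ w :: (Y ++ [r]) := by
    have : l ++ [s, r] = (l ++ [s]) ++ [r] := by simp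
    rw [this, hXY]; simp
  rw [e] at h
  rcases Y.eq_nil_or_concat with rfl | ⟨Z, s', rfl⟩
  · obtain ⟨-, h2⟩ := List.append_inj' hXY rfl
    obtain rfl : s = w := by simpa using h2
    exact left_mem_segment ℝ _ _
  · have hXY' : l ++ [s] = (X ++ w :: Z) ++ [s'] := by rw [hXY]; simp
    obtain ⟨-, h2⟩ := List.append_inj' hXY' rfl
    obtain rfl : s = s' := by simpa using h2
    refine IsGeodesic.straight (l := w :: Z) ?_ hwr
    simpa using h.right

/-! ### Guards -/

namespace SimplePolygon

variable (S : SimplePolygon)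

theorem pu_visible {y : Pt} (hy : y ∈ S.P) (hyu : y ≠ S.u) : Visible S.P (S.pu y) y := by
  obtain ⟨-, l, hl⟩ := S.pu_spec y hy hyu
  exact hl.seg

theorem pv_visible {y : Pt} (hy : y ∈ S.P) (hyv : y ≠ S.v) : Visible S.P (S.pv y) y := by
  obtain ⟨-, l, hl⟩ := S.pv_spec y hy hyv
  exact hl.seg

theorem isVertex_u : S.IsVertex S.u := ⟨0, by have := S.three_le; omega, rfl⟩

theorem isVertex_v : S.IsVertex S.v := ⟨S.n - 1, by have := S.three_le; omega, rfl⟩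

theorem u_ne_v : S.u ≠ S.v := by
  intro h
  have h3 := S.three_le
  have := S.inj 0 (by omega) (S.n - 1) (by omega) h
  omega

theorem seg_vu : segment ℝ S.v S.u ⊆ S.P := by
  have h3 := S.three_le
  have h := (S.edge_subset (show S.n - 1 < S.n by omega)).trans S.frontier_subset
  have e : S.vtx (S.n - 1 + 1) = S.u := by
    rw [show S.n - 1 + 1 = 0 + S.n by omega]
    exact S.periodic 0
  rwa [e] at h

theorem mem_P {x : Pt} (hx : S.IsVertex x) : x ∈ S.P := S.frontier_subset (S.vtx_mem hx)

/-- `g` is a non-leaf vertex of `SPT(u)` or of `SPT(v)`. -/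
def IsGuard (g : Pt) : Prop :=
  (∃ i < S.n, S.vtx i ≠ S.u ∧ S.pu (S.vtx i) = g) ∨
    (∃ i < S.n, S.vtx i ≠ S.v ∧ S.pv (S.vtx i) = g)

theorem isGuard_pu {r : Pt} (hr : S.IsVertex r) (hru : r ≠ S.u) : S.IsGuard (S.pu r) := by
  obtain ⟨i, hi, rfl⟩ := hr
  exact Or.inl ⟨i, hi, hru, rfl⟩

theorem isGuard_pv {r : Pt} (hr : S.IsVertex r) (hrv : r ≠ S.v) : S.IsGuard (S.pv r) := by
  obtain ⟨i, hi, rfl⟩ := hr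
  exact Or.inr ⟨i, hi, hrv, rfl⟩

theorem ne_of_coords {w e₁ e₂ : Pt} (hcr : cr e₁ e₂ ≠ 0) {ρ₁ ρ₂ : ℝ} (h : 0 < ρ₁) :
    w + ρ₁ • e₁ + ρ₂ • e₂ ≠ w := by
  intro e
  have h' : w + ρ₁ • e₁ + ρ₂ • e₂ = w + (0 : ℝ) • e₁ + (0 : ℝ) • e₂ := by rw [e]; simp
  exact h.ne' (cr_coords_inj hcr h').1

/-- A point seen by the root `u` is seen by a guard. -/
theorem covered_of_root {z : Pt} (huz : segment ℝ S.u z ⊆ S.P) :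
    ∃ g, S.IsGuard g ∧ Visible S.P g z := by
  by_cases h0 : cr (S.v - S.u) (z - S.u) = 0
  · obtain ⟨-, l, hl⟩ := S.pu_spec S.v (S.mem_P S.isVertex_v) S.u_ne_v.symm
    have huv : segment ℝ S.u S.v ⊆ S.P := by rw [segment_symm]; exact S.seg_vu
    have hg := hl.straight huv
    refine ⟨_, S.isGuard_pu S.isVertex_v S.u_ne_v.symm, ?_⟩
    have hgu : segment ℝ (S.pu S.v) S.u ⊆ S.P :=
      ((convex_segment _ _).segment_subset hg (left_mem_segment ℝ _ _)).trans huv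
    refine (segment_subset_of_collinear ?_).trans (union_subset hgu huz)
    obtain ⟨t, -, -, ht⟩ := mem_segment_iff_add.1 hg
    have e : S.pu S.v - S.u = t • (S.v - S.u) := by
      rw [ht]; exact add_sub_cancel_left _ _
    rw [e, cr_smul_left, h0, mul_zero]
  · have hcr : cr (z - S.u) (S.v - z) ≠ 0 := by
      intro h
      apply h0
      have e : S.v - S.u = (z - S.u) + (S.v - z) := by abel
      rw [cr_swap, e, cr_add_right, cr_self, h]; simp
    have ez : S.u + (z - S.u) = z := by abel
    have ev : S.u + (1 : ℝ) • (z - S.u) + (1 : ℝ) • (S.v - z) = S.v := by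
      rw [one_smul, one_smul]; abel
    obtain ⟨ρ₁, ρ₂, h1, h2, hv, hs, htri, -⟩ := S.exists_empty S.isVertex_u hcr
      (by rwa [ez]) ⟨1, 1, one_pos, zero_le_one, by rw [ev]; exact S.isVertex_v,
        by rw [ev, segment_symm]; exact S.seg_vu⟩
    have hru := ne_of_coords (w := S.u) (ρ₂ := ρ₂) hcr h1
    set r := S.u + ρ₁ • (z - S.u) + ρ₂ • (S.v - z) with hr
    rw [ez] at htri
    obtain ⟨-, l, hl⟩ := S.pu_spec r (S.mem_P hv) hru
    exact ⟨_, S.isGuard_pu hv hru, htri _ (hl.straight hs)⟩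

/-- Let `aw` be the last edge of the geodesic from `u` to the vertex `w`, and let `wz` be the last
edge of a geodesic from `u` to `z`, making a proper turn at `w`. Then `z` is seen by a guard. -/
theorem covered_of_turn {w z a : Pt} (hw : S.IsVertex w) (hwu : w ≠ S.u)
    {l m : List Pt} (hm : IsGeodesic S.P S.u w (m ++ [a, w])) (hnd : (m ++ [a, w]).Nodup)
    (hz : IsGeodesic S.P S.u z (l ++ [w, z])) (hcr : cr (a - w) (z - w) ≠ 0) :
    ∃ g, S.IsGuard g ∧ Visible S.P g z := by
  have hwz : segment ℝ w z ⊆ S.P := hz.seg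
  have ez : w + (z - w) = z := by abel
  have hcr' : cr (z - w) (a - w) ≠ 0 := by
    rw [cr_swap]; exact neg_ne_zero.2 hcr
  have hext : ExtIn S.P z w a := by
    have h1 : IsGeodesic S.P S.u z (m ++ a :: w :: z :: []) := by
      have := hz.swap (m := m ++ [a]) (by simpa using hm)
      simpa using this
    exact (h1.extIn hcr).symm
  have hseg : segment ℝ w (w + (z - w)) ⊆ S.P := by rwa [ez]
  -- exterior points in the angle at `w` yield a vertex there
  obtain ⟨ρ₁, ρ₂, h1, h2, hv, hs, htri, ε, hε, hlast⟩ := S.exists_empty hw hcr' hseg (by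
    obtain ⟨ε, hε, H⟩ := S.sector hw hcr' hseg
    obtain ⟨y, hy, hd, α, β, hα, hβ, hE⟩ := hext ε hε
    obtain ⟨ρ₁, ρ₂, h1, h2, hv, hs, -⟩ := H y hy hd α β hα hβ.le hE
    exact ⟨ρ₁, ρ₂, h1, h2, hv, hs⟩)
  have hrw := ne_of_coords (w := w) (ρ₂ := ρ₂) hcr' h1
  set r := w + ρ₁ • (z - w) + ρ₂ • (a - w) with hr
  rw [ez] at htri
  have hrE : r - w = ρ₁ • (z - w) + ρ₂ • (a - w) := by rw [hr]; abel
  have hcrr : cr (a - w) (r - w) ≠ 0 := by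
    rw [hrE, cr_add_right, cr_smul_right, cr_smul_right, cr_self, mul_zero, add_zero]
    exact mul_ne_zero h1.ne' hcr
  have hext' : ExtIn S.P a w r := by
    intro δ hδ
    obtain ⟨y, hy, hd, α, β, hα, hβ, hE⟩ := hext (min ε δ) (lt_min hε hδ)
    have hlt := hlast y hy (hd.trans_le (min_le_left _ _)) α β hα hβ.le hE
    refine ⟨y, hy, hd.trans_le (min_le_right _ _), β - α / ρ₁ * ρ₂, α / ρ₁, ?_,
      by positivity, ?_⟩
    · rw [sub_pos, div_mul_eq_mul_div, div_lt_iff₀ h1]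
      linarith
    · have e : α = α / ρ₁ * ρ₁ := by field_simp
      rw [hrE, hE]
      generalize α / ρ₁ = k at e
      subst e
      module
  have hb := S.compact'.isBounded
  by_cases hru : r = S.u
  · exfalso
    have hγ : IsGeodesic S.P S.u r [S.u] := by
      rw [hru]
      refine ⟨IsPathIn.mk' (by simp) (by simp) (by simp), fun l' _ => ?_⟩
      simpa [pathLen] using pathLen_nonneg l'
    have := core hb S.isPreconnected_compl hm hnd hγ (by simp) hs hcrr hext'
    exact hwu (by simpa using this)
  · obtain ⟨-, k, hk⟩ := S.pu_spec r (S.mem_P hv) hru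
    refine ⟨_, S.isGuard_pu hv hru, htri _ ?_⟩
    by_cases hsr : S.pu r = r
    · rw [hsr]; exact right_mem_segment ℝ _ _
    obtain ⟨k', hk', hnd'⟩ := hk.exists_nodup_concat hsr
    have hmem := core hb S.isPreconnected_compl hm hnd hk' hnd' hs hcrr hext'
    refine hk'.straight_of_mem hs ?_
    have : w ≠ r := hrw.symm
    simpa [this] using hmem

/-- Every point of the polygon is seen by a guard. -/
theorem covered {z : Pt} (hz : z ∈ S.P) : ∃ g, S.IsGuard g ∧ Visible S.P g z := by
  by_cases hzu : z = S.u
  · subst hzu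
    exact ⟨_, S.isGuard_pv S.isVertex_u S.u_ne_v, S.pv_visible hz S.u_ne_v⟩
  by_cases hzv : S.IsVertex z
  · exact ⟨_, S.isGuard_pu hzv hzu, S.pu_visible hz hzu⟩
  obtain ⟨hwv, l, hl⟩ := S.pu_spec z hz hzu
  have hw : S.IsVertex (S.pu z) := hwv
  set w := S.pu z with hwdef
  have hwz : segment ℝ w z ⊆ S.P := hl.seg
  by_cases hwu : w = S.u
  · rw [hwu] at hwz
    exact S.covered_of_root hwz
  obtain ⟨-, k, hk⟩ := S.pu_spec w (S.mem_P hw) hwu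
  have hg := S.isGuard_pu hw hwu
  by_cases haw : S.pu w = w
  · rw [haw] at hg
    exact ⟨w, hg, hwz⟩
  by_cases hcr : cr (S.pu w - w) (z - w) = 0
  · exact ⟨_, hg, (segment_subset_of_collinear hcr).trans (union_subset hk.seg hwz)⟩
  obtain ⟨m, hm, hnd⟩ := hk.exists_nodup_concat haw
  exact S.covered_of_turn hw hwu hm hnd hl hcr

end SimplePolygon

/-- In a simple polygon with edge `uv`, every point `y ≠ u` of
`P` is visible from `p_u(y)` and every point `y ≠ v` is visible from `p_v(y)`;
consequently, guards placed on all non-leaf vertices of `SPT(u)` and `SPT(v)`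
(the vertices that are the parent of some vertex) see every point of `P`. -/
theorem parents_see_their_children_and_nonleaf_guards_cover (S : SimplePolygon) :
    (∀ y ∈ S.P, y ≠ S.u → Visible S.P (S.pu y) y) ∧
    (∀ y ∈ S.P, y ≠ S.v → Visible S.P (S.pv y) y) ∧
    (∀ z ∈ S.P, ∃ g : Pt,
      ((∃ i < S.n, S.vtx i ≠ S.u ∧ S.pu (S.vtx i) = g) ∨
       (∃ i < S.n, S.vtx i ≠ S.v ∧ S.pv (S.vtx i) = g)) ∧ Visible S.P g z) := by
  exact ⟨fun _ hy hyu => S.pu_visible hy hyu, fun _ hy hyv => S.pv_visible hy hyv,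
    fun _ hz => S.covered hz⟩
end

section
/- Let P be a simple orthogonal polygon (without holes) that is weakly visible from its edge uv, and let z_1, z_2, …, z_k be distinct vertices of P such that for all i < j, the vertex z_j is not visible from p_u(z_i) and not visible from p_v(z_i), and such that p_u(z_i) ≠ p_v(z_i) for each i. Then the vertices p_u(z_1), p_v(z_1), …, p_u(z_k), p_v(z_k) are pairwise distinct; in particular, the guard set S_A = {p_u(z_i) : 1 ≤ i ≤ k} ∪ {p_v(z_i) : 1 ≤ i ≤ k} satisfies |S_A| = 2k. -/
/-!
Every vertex `z` of the polygon is visible from `p_u(z)` and from `p_v(z)`, because the last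
segment of a geodesic to `z` lies in `P` (a root is its own parent). Suppose a parent of `z_i` coincides with a parent of
`z_j`, where `i < j`. Then `z_j` is visible from that parent of `z_i`, against the hypothesis.
For `i = j` the two parents differ by assumption. So both parent maps are injective along
`z_1, …, z_k` and have disjoint images, which gives the cardinality `2k`.
-/

open Set

namespace SimplePolygon

theorem IsVertex.mem {S : SimplePolygon} {x : Pt} (hx : S.IsVertex x) : x ∈ S.P := by
  obtain ⟨i, hi, rfl⟩ := hx
  refine S.compact'.isClosed.frontier_subset ?_
  rw [S.boundary]
  exact Set.mem_biUnion (Finset.mem_coe.2 (Finset.mem_range.2 hi)) (left_mem_segment ℝ _ _)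

end SimplePolygon

/-- The last segment of a polygonal path in `P` lies in `P`. -/
theorem IsPathIn.visible_last {P : Set Pt} {a b p x : Pt} {l : List Pt}
    (h : IsPathIn P a b (l ++ [p, x])) : Visible P p x := by
  have hc := (List.isChain_append.1 h.2.2.2).2.1
  simpa [Visible] using hc

namespace SimplePolygon

theorem visible_pu {S : SimplePolygon} {x : Pt} (hx : S.IsVertex x) :
    Visible S.P (S.pu x) x := by
  by_cases h : x = S.vtx 0
  · rw [h, S.pu_root, Visible, segment_same, Set.singleton_subset_iff, ← h]
    exact hx.mem
  · obtain ⟨-, l, hl⟩ := S.pu_spec x hx.mem h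
    exact hl.1.visible_last

theorem visible_pv {S : SimplePolygon} {x : Pt} (hx : S.IsVertex x) :
    Visible S.P (S.pv x) x := by
  by_cases h : x = S.vtx (S.n - 1)
  · rw [h, S.pv_root, Visible, segment_same, Set.singleton_subset_iff, ← h]
    exact hx.mem
  · obtain ⟨-, l, hl⟩ := S.pv_spec x hx.mem h
    exact hl.1.visible_last

end SimplePolygon

/-- In a simple orthogonal polygon weakly visible from `uv`:
if `z_1, …, z_k` are distinct vertices such that for `i < j` the vertex `z_j`
is not visible from `p_u(z_i)` nor from `p_v(z_i)`, and `p_u(z_i) ≠ p_v(z_i)`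
for each `i`, then the `2k` parents are pairwise distinct; in particular the
guard set `S_A = {p_u(z_i)} ∪ {p_v(z_i)}` has `|S_A| = 2k`. -/
theorem orth_guard_set_has_size_two_k (S : SimplePolygon)
    (horth : S.IsOrthogonal) (hwv : S.WeaklyVisible)
    (k : ℕ) (z : Fin k → Pt) (hzv : ∀ i, S.IsVertex (z i))
    (hzinj : Function.Injective z)
    (h2 : ∀ i j : Fin k, i < j →
      ¬ Visible S.P (S.pu (z i)) (z j) ∧ ¬ Visible S.P (S.pv (z i)) (z j))
    (hne : ∀ i, S.pu (z i) ≠ S.pv (z i)) :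
    (∀ i j : Fin k, S.pu (z i) = S.pu (z j) → i = j) ∧
    (∀ i j : Fin k, S.pv (z i) = S.pv (z j) → i = j) ∧
    (∀ i j : Fin k, S.pu (z i) ≠ S.pv (z j)) ∧
    (Set.range (fun i => S.pu (z i)) ∪ Set.range (fun i => S.pv (z i))).ncard = 2 * k := by
  have hu := fun i => SimplePolygon.visible_pu (hzv i)
  have hv := fun i => SimplePolygon.visible_pv (hzv i)
  have huu : ∀ i j : Fin k, S.pu (z i) = S.pu (z j) → i = j := by
    intro i j h
    rcases lt_trichotomy i j with hij | hij | hij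
    · exact absurd (h ▸ hu j) (h2 i j hij).1
    · exact hij
    · exact absurd (h ▸ hu i) (h2 j i hij).1
  have hvv : ∀ i j : Fin k, S.pv (z i) = S.pv (z j) → i = j := by
    intro i j h
    rcases lt_trichotomy i j with hij | hij | hij
    · exact absurd (h ▸ hv j) (h2 i j hij).2
    · exact hij
    · exact absurd (h ▸ hv i) (h2 j i hij).2
  have huv : ∀ i j : Fin k, S.pu (z i) ≠ S.pv (z j) := by
    intro i j h
    rcases lt_trichotomy i j with hij | rfl | hij
    · exact (h2 i j hij).1 (h ▸ hv j)
    · exact hne i h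
    · exact (h2 j i hij).2 (h ▸ hu i)
  refine ⟨huu, hvv, huv, ?_⟩
  rw [Set.ncard_union_eq ?_ (Set.finite_range _) (Set.finite_range _),
    ← Set.image_univ, ← Set.image_univ,
    Set.ncard_image_of_injective _ (fun i j h => huu i j h),
    Set.ncard_image_of_injective _ (fun i j h => hvv i j h), Set.ncard_univ, Nat.card_fin]
  · ring
  · rw [Set.disjoint_left]
    rintro _ ⟨i, rfl⟩ ⟨j, h⟩
    exact huv i j h.symm
end
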